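/- arXiv:2505.19072 — 4 statements merged into one kernel-verified Lean document; each statement's English description precedes it below -/
import Mathlib

section
/- Let T be a benign 12-SV table of shape λ/μ and let k be a descent of T. Then: (1) res_k(T) is again a benign 12-SV table with ceq(res_k(T)) = ceq(T), ex(res_k(T)) = ex(T), and ircont(res_k(T)) = ircont(T); (2) k is a descent of flip(res_k(T)), and res_k(flip(res_k(T))) = flip(T); (3) ℓ(T) > ℓ(res_k(T)). -/
open scoped Classical

/-- A partition, given as its weakly decreasing sequence of parts (0-indexed),
with finitely many nonzero parts. -/
def IsPartitionFun (f : ℕ → ℕ) : Prop :=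
  (∀ i, f (i + 1) ≤ f i) ∧ ∃ N, ∀ i, N ≤ i → f i = 0

/-- Box `(i, j)` (row `i`, column `j`, both 0-indexed) lies in the skew shape `lam/mu`. -/
def InShape (lam mu : ℕ → ℕ) (i j : ℕ) : Prop :=
  mu i ≤ j ∧ j < lam i

/-- `A ≤ B` for finite sets of naturals: every element of `A` is at most every
element of `B` (for nonempty sets this says `max A ≤ min B`). -/
def FinsetLE (A B : Finset ℕ) : Prop :=
  ∀ a ∈ A, ∀ b ∈ B, a ≤ b

/-- A set-valued reverse plane partition of skew shape `lam/mu`: every box of the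
shape is filled with a nonempty finite set of positive integers, the sets weakly
increase along rows and down columns, and boxes outside the shape are empty. -/
def IsSVRPP (lam mu : ℕ → ℕ) (T : ℕ → ℕ → Finset ℕ) : Prop :=
  (∀ i j, ¬ InShape lam mu i j → T i j = ∅) ∧
  (∀ i j, InShape lam mu i j → (T i j).Nonempty) ∧
  (∀ i j x, x ∈ T i j → 1 ≤ x) ∧
  (∀ i j, InShape lam mu i j → InShape lam mu i (j + 1) → FinsetLE (T i j) (T i (j + 1))) ∧
  (∀ i j, InShape lam mu i j → InShape lam mu (i + 1) j → FinsetLE (T i j) (T (i + 1) j))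

/-- An SVRPP all of whose entries are subsets of `{1, …, n}`. -/
def IsSVRPPn (lam mu : ℕ → ℕ) (n : ℕ) (T : ℕ → ℕ → Finset ℕ) : Prop :=
  IsSVRPP lam mu T ∧ ∀ i j, T i j ⊆ Finset.Icc 1 n

/-- `ircont T v` = number of columns of `T` containing a set that contains `v`. -/
noncomputable def ircont (T : ℕ → ℕ → Finset ℕ) (v : ℕ) : ℕ :=
  Set.ncard {j : ℕ | ∃ i, v ∈ T i j}

/-- `ceq lam mu T i` = number of boxes `(i,j)` of the shape with `(i+1,j)` also in the
shape and `max T(i,j) = min T(i+1,j)`. -/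
noncomputable def ceq (lam mu : ℕ → ℕ) (T : ℕ → ℕ → Finset ℕ) (i : ℕ) : ℕ :=
  Set.ncard {j : ℕ | InShape lam mu i j ∧ InShape lam mu (i + 1) j ∧
    ∃ m, m ∈ T i j ∧ (∀ x ∈ T i j, x ≤ m) ∧ m ∈ T (i + 1) j ∧ ∀ x ∈ T (i + 1) j, m ≤ x}

/-- `exv lam mu T i` = excess of row `i`: the sum over the boxes of row `i` of
(cardinality of the filling minus one). -/
def exv (lam mu : ℕ → ℕ) (T : ℕ → ℕ → Finset ℕ) (i : ℕ) : ℕ :=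
  ∑ j ∈ Finset.Ico (mu i) (lam i), ((T i j).card - 1)

/-! ### Two-letter fillings (letters `a` and `a+1`) and descent resolution -/

/-- Column `j` of the filling `S` contains the letter `x` somewhere. -/
def ColHas (S : ℕ → ℕ → Finset ℕ) (j x : ℕ) : Prop := ∃ r, x ∈ S r j

/-- Column `j` is `a`-pure: it contains the letter `a` but not the letter `a+1`. -/
def ColPureA (a : ℕ) (S : ℕ → ℕ → Finset ℕ) (j : ℕ) : Prop :=
  ColHas S j a ∧ ¬ ColHas S j (a + 1)

/-- Column `j` is `(a+1)`-pure: it contains the letter `a+1` but not the letter `a`. -/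
def ColPureB (a : ℕ) (S : ℕ → ℕ → Finset ℕ) (j : ℕ) : Prop :=
  ColHas S j (a + 1) ∧ ¬ ColHas S j a

/-- Column `j` is mixed: it contains both letters `a` and `a+1`. -/
def ColMixed (a : ℕ) (S : ℕ → ℕ → Finset ℕ) (j : ℕ) : Prop :=
  ColHas S j a ∧ ColHas S j (a + 1)

/-- `sep a S j`: the smallest row index `r` with `a+1 ∈ S r j` (the transition row of a
mixed column). -/
noncomputable def sep (a : ℕ) (S : ℕ → ℕ → Finset ℕ) (j : ℕ) : ℕ :=
  sInf {r : ℕ | a + 1 ∈ S r j}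

/-- `botA a S j`: the largest row index `r` with `a ∈ S r j` (the bottom-most box of
column `j` containing the letter `a`). -/
noncomputable def botA (a : ℕ) (S : ℕ → ℕ → Finset ℕ) (j : ℕ) : ℕ :=
  sSup {r : ℕ | a ∈ S r j}

/-- `k` is a descent of `S`: in some row, a box whose maximum is `a+1` lies immediately
to the left of a box whose minimum is `a`. -/
def Descent (a : ℕ) (S : ℕ → ℕ → Finset ℕ) (k : ℕ) : Prop :=
  ∃ r, a + 1 ∈ S r k ∧ a ∈ S r (k + 1)

/-- The flip map: each entry of every `a`-pure column is replaced by `{a+1}`, each entry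
of every `(a+1)`-pure column is replaced by `{a}`, and mixed columns stay unchanged. -/
noncomputable def flipT (a : ℕ) (S : ℕ → ℕ → Finset ℕ) : ℕ → ℕ → Finset ℕ :=
  fun r j =>
    if ColPureA a S j then (S r j).image (fun _ => a + 1)
    else if ColPureB a S j then (S r j).image (fun _ => a)
    else S r j

/-- The descent-resolution operation `res_k` at columns `k, k+1`, implementing the
(M1), (2M) and (21) moves (with `a, a+1` playing the roles of `1, 2`). -/
noncomputable def resFun (a : ℕ) (S : ℕ → ℕ → Finset ℕ) (k : ℕ) : ℕ → ℕ → Finset ℕ :=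
  fun r j =>
    if ColMixed a S k ∧ ColPureA a S (k + 1) then
      -- (M1): the transition row is `sep a S k`, the transition entry is `S (sep a S k) k`.
      (if j = k then (S r j).image (fun _ => a)
       else if j = k + 1 then
         (if (S r j).Nonempty then
            (if r < sep a S k then {a}
             else if r = sep a S k then S r k
             else {a + 1})
          else ∅)
       else S r j)
    else if ColPureB a S k ∧ ColMixed a S (k + 1) then
      -- (2M): the transition row is `botA a S (k+1)`, the transition entry is
      -- `S (botA a S (k+1)) (k+1)`.
      (if j = k then
         (if (S r j).Nonempty then
            (if r < botA a S (k + 1) then {a}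
             else if r = botA a S (k + 1) then S r (k + 1)
             else {a + 1})
          else ∅)
       else if j = k + 1 then (S r j).image (fun _ => a + 1)
       else S r j)
    else if ColPureB a S k ∧ ColPureA a S (k + 1) then
      -- (21): the two columns swap purities.
      (if j = k then (S r j).image (fun _ => a)
       else if j = k + 1 then (S r j).image (fun _ => a + 1)
       else S r j)
    else S r j

/-- One descent-resolution step: `ResStep a S S'` holds when `S' = res_k S` for some
descent `k` of `S`. -/
def ResStep (a : ℕ) (S S' : ℕ → ℕ → Finset ℕ) : Prop :=
  ∃ k, Descent a S k ∧ S' = resFun a S k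

/-! ### 12-SV tables of a skew shape -/

/-- A 12-SV table of shape `lam/mu`: every box of the shape is filled with a nonempty
subset of `{1,2}`, columns weakly increase, rows are unconstrained, and boxes outside
the shape are empty. -/
def Is12SVTable (lam mu : ℕ → ℕ) (T : ℕ → ℕ → Finset ℕ) : Prop :=
  (∀ i j, ¬ InShape lam mu i j → T i j = ∅) ∧
  (∀ i j, InShape lam mu i j → (T i j).Nonempty ∧ T i j ⊆ ({1, 2} : Finset ℕ)) ∧
  (∀ i j, InShape lam mu i j → InShape lam mu (i + 1) j → FinsetLE (T i j) (T (i + 1) j))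

/-- A 12-SV table is benign if over consecutive mixed columns `k < k'` the `sep` values
weakly decrease, strictly so whenever column `k'` contains a box filled with `{1,2}`. -/
def Benign (T : ℕ → ℕ → Finset ℕ) : Prop :=
  ∀ k k', k < k' → ColMixed 1 T k → ColMixed 1 T k' →
    (∀ m, k < m → m < k' → ¬ ColMixed 1 T m) →
    sep 1 T k' ≤ sep 1 T k ∧
    ((∃ i, T i k' = ({1, 2} : Finset ℕ)) → sep 1 T k' < sep 1 T k)

/-- The signature of column `j`: `0` for an empty or `(a+1)`-pure column, `1` for a mixed
column, `2` for an `a`-pure column. -/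
noncomputable def sig (a : ℕ) (S : ℕ → ℕ → Finset ℕ) (j : ℕ) : ℕ :=
  if ColPureA a S j then 2 else if ColMixed a S j then 1 else 0

/-- `ℓ(S) = Σ_{j ≥ 1} j · sig(column j)`, columns being `1`-indexed (internally the
`0`-indexed column `j` has position `j + 1`). -/
noncomputable def ellStat (a : ℕ) (S : ℕ → ℕ → Finset ℕ) : ℕ :=
  ∑ᶠ j : ℕ, (j + 1) * sig a S j

/-- Canonical two-threshold filling. -/
noncomputable def fill (lam mu : ℕ → ℕ) (u v : ℕ → ℕ) : ℕ → ℕ → Finset ℕ := fun i j =>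
  ({1, 2} : Finset ℕ).filter
    (fun x => InShape lam mu i j ∧ ((x = 1 ∧ i < u j) ∨ (x = 2 ∧ v j ≤ i)))

theorem mem_fill {lam mu u v : ℕ → ℕ} {i j x : ℕ} :
    x ∈ fill lam mu u v i j ↔ InShape lam mu i j ∧ ((x = 1 ∧ i < u j) ∨ (x = 2 ∧ v j ≤ i)) := by
  simp only [fill, Finset.mem_filter, Finset.mem_insert, Finset.mem_singleton]
  grind

/-- column is mixed -/
def MixC (lam mu : ℕ → ℕ) (p q j : ℕ) : Prop :=
  InShape lam mu (p - 1) j ∧ InShape lam mu q j ∧ 0 < p ∧ q ≤ p ∧ p ≤ q + 1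

/-- normalized column data -/
def GoodC (lam mu : ℕ → ℕ) (N p q j : ℕ) : Prop :=
  (p = 0 ∧ q = 0) ∨ (p = N ∧ q = N) ∨ MixC lam mu p q j

theorem anti_of {f : ℕ → ℕ} (h : IsPartitionFun f) : Antitone f := antitone_nat_of_succ_le h.1

theorem InShape.conv {lam mu : ℕ → ℕ} (hl : IsPartitionFun lam) (hm : IsPartitionFun mu)
    {i m i' j : ℕ} (h : InShape lam mu i j) (h' : InShape lam mu i' j) (h1 : i ≤ m) (h2 : m ≤ i') :
    InShape lam mu m j :=
  ⟨(anti_of hm h1).trans h.1, h'.2.trans_le (anti_of hl h2)⟩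

theorem InShape.corner {lam mu : ℕ → ℕ} (hl : IsPartitionFun lam) (hm : IsPartitionFun mu)
    {i i' j : ℕ} (h : InShape lam mu i j) (h' : InShape lam mu i' (j + 1)) (h1 : i ≤ i') :
    InShape lam mu i (j + 1) ∧ InShape lam mu i' j := by
  have a := anti_of hm h1
  have b := anti_of hl h1
  obtain ⟨h2, h3⟩ := h
  obtain ⟨h4, h5⟩ := h'
  refine ⟨⟨?_, ?_⟩, ⟨?_, ?_⟩⟩ <;> omega

theorem InShape.ltN {lam mu : ℕ → ℕ} (hl : IsPartitionFun lam) {N : ℕ} (hN : lam N = 0)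
    {i j : ℕ} (h : InShape lam mu i j) : i < N := by
  by_contra hc
  have := anti_of hl (not_lt.1 hc)
  have := h.2
  omega

theorem col_mono {lam mu : ℕ → ℕ} (hl : IsPartitionFun lam) (hm : IsPartitionFun mu)
    {T : ℕ → ℕ → Finset ℕ} (hT : Is12SVTable lam mu T) {i i' j a b : ℕ} (h : i < i')
    (ha : a ∈ T i j) (hb : b ∈ T i' j) : a ≤ b := by
  have sh : ∀ i x, x ∈ T i j → InShape lam mu i j := by
    intro i x hx
    by_contra hc
    rw [hT.1 i j hc] at hx
    simp at hx
  induction i', h using Nat.le_induction generalizing b with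
  | base => exact hT.2.2 i j (sh _ _ ha) (sh _ _ hb) a ha b hb
  | succ n hn ih =>
    have hs := InShape.conv hl hm (sh _ _ ha) (sh _ _ hb) (m := n) (by omega) (by omega)
    obtain ⟨c, hc⟩ := (hT.2.1 n j hs).1
    exact (ih hc).trans (hT.2.2 n j hs (sh _ _ hb) c hc b hb)

theorem exists_fill {lam mu : ℕ → ℕ} (hl : IsPartitionFun lam) (hm : IsPartitionFun mu)
    {T : ℕ → ℕ → Finset ℕ} (hT : Is12SVTable lam mu T) {N : ℕ} (hN : lam N = 0) :
    ∃ u v : ℕ → ℕ, T = fill lam mu u v ∧ ∀ j, GoodC lam mu N (u j) (v j) j := by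
  have sh : ∀ i j x, x ∈ T i j → InShape lam mu i j := by
    intro i j x hx
    by_contra hc
    rw [hT.1 i j hc] at hx
    simp at hx
  have s12 : ∀ i j x, x ∈ T i j → x = 1 ∨ x = 2 := by
    intro i j x hx
    have := (hT.2.1 i j (sh _ _ _ hx)).2 hx
    simpa using this
  have ne : ∀ i j, InShape lam mu i j → 1 ∈ T i j ∨ 2 ∈ T i j := by
    intro i j h
    obtain ⟨c, hc⟩ := (hT.2.1 i j h).1
    rcases s12 _ _ _ hc with rfl | rfl <;> simp [hc]
  have key : ∀ j, ∃ p q : ℕ, (∀ i x, x ∈ T i j ↔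
      InShape lam mu i j ∧ ((x = 1 ∧ i < p) ∨ (x = 2 ∧ q ≤ i))) ∧ GoodC lam mu N p q j := by
    intro j
    by_cases h2 : ∃ r, 2 ∈ T r j
    · by_cases h1 : ∃ r, 1 ∈ T r j
      · obtain ⟨r1, hr1⟩ := h1
        let q := Nat.find h2
        have hq : 2 ∈ T q j := Nat.find_spec h2
        have hqm : ∀ m, m < q → 2 ∉ T m j := fun m hmq => Nat.find_min h2 hmq
        clear_value q
        have mono := fun i i' a b h => col_mono hl hm hT (i := i) (i' := i') (a := a) (b := b) (j := j) h
        have hr1q : r1 ≤ q := by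
          by_contra hc
          have := mono q r1 2 1 (by omega) hq hr1
          omega
        have up : ∀ i, InShape lam mu i j → q < i → 2 ∈ T i j ∧ 1 ∉ T i j := by
          intro i hi hqi
          have : 1 ∉ T i j := fun h => by
            have := mono q i 2 1 hqi hq h
            omega
          exact ⟨(ne i j hi).resolve_left this, this⟩
        have dn : ∀ i, InShape lam mu i j → i < q → 1 ∈ T i j := fun i hi hiq =>
          (ne i j hi).resolve_right (hqm i hiq)
        by_cases h1q : 1 ∈ T q j
        · refine ⟨q + 1, q, ?_, Or.inr (Or.inr ⟨sh _ _ _ hq, sh _ _ _ hq, by omega, by omega, by omega⟩)⟩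
          intro i x
          rcases lt_trichotomy i q with h | rfl | h <;> grind
        · have : r1 ≠ q := by rintro rfl; exact h1q hr1
          refine ⟨q, q, ?_, Or.inr (Or.inr ⟨?_, sh _ _ _ hq, by omega, by omega, by omega⟩)⟩
          · intro i x
            rcases lt_trichotomy i q with h | rfl | h <;> grind
          · exact InShape.conv hl hm (sh _ _ _ hr1) (sh _ _ _ hq) (by omega) (by omega)
      · refine ⟨0, 0, ?_, Or.inl ⟨rfl, rfl⟩⟩
        intro i x
        grind
    · refine ⟨N, N, ?_, Or.inr (Or.inl ⟨rfl, rfl⟩)⟩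
      intro i x
      have : InShape lam mu i j → i < N := fun h => InShape.ltN hl hN h
      grind
  choose u v h using key
  refine ⟨u, v, ?_, fun j => (h j).2⟩
  funext i j
  ext x
  rw [mem_fill, (h j).1]

theorem fill_table {lam mu u v : ℕ → ℕ} (h : ∀ j, v j ≤ u j ∧ u j ≤ v j + 1) :
    Is12SVTable lam mu (fill lam mu u v) := by
  refine ⟨?_, ?_, ?_⟩
  · intro i j hi
    ext x
    simp [mem_fill, hi]
  · intro i j hi
    have := h j
    refine ⟨?_, Finset.filter_subset _ _⟩
    by_cases hc : i < u j
    · exact ⟨1, mem_fill.2 ⟨hi, by simp [hc]⟩⟩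
    · exact ⟨2, mem_fill.2 ⟨hi, by simp; omega⟩⟩
  · intro i j _ _ a ha b hb
    rw [mem_fill] at ha hb
    have := h j
    omega

theorem GoodC.le {lam mu : ℕ → ℕ} {N p q j : ℕ} (h : GoodC lam mu N p q j) : q ≤ p ∧ p ≤ q + 1 := by
  unfold GoodC MixC at h
  omega

theorem colHas1 {lam mu u v : ℕ → ℕ} {j : ℕ} :
    ColHas (fill lam mu u v) j 1 ↔ ∃ r, InShape lam mu r j ∧ r < u j := by
  simp [ColHas, mem_fill]

theorem colHas2 {lam mu u v : ℕ → ℕ} {j : ℕ} :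
    ColHas (fill lam mu u v) j 2 ↔ ∃ r, InShape lam mu r j ∧ v j ≤ r := by
  simp [ColHas, mem_fill]

section
variable {lam mu u v : ℕ → ℕ} {N : ℕ}

theorem mixed_iff (hl : IsPartitionFun lam) (hN : lam N = 0) {j : ℕ}
    (hg : GoodC lam mu N (u j) (v j) j) :
    ColMixed 1 (fill lam mu u v) j ↔ MixC lam mu (u j) (v j) j := by
  rw [ColMixed, colHas1, colHas2]
  constructor
  · rintro ⟨⟨r, h1, h2⟩, ⟨s, h3, h4⟩⟩
    have := InShape.ltN hl hN h3
    rcases hg with h | h | h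
    · omega
    · omega
    · exact h
  · intro h
    exact ⟨⟨_, h.1, by have := h.2.2.1; omega⟩, ⟨_, h.2.1, le_rfl⟩⟩

theorem sep_eq {j : ℕ} (h : MixC lam mu (u j) (v j) j) : sep 1 (fill lam mu u v) j = v j := by
  unfold sep
  apply le_antisymm
  · exact Nat.sInf_le (mem_fill.2 ⟨h.2.1, by simp⟩)
  · have : 1 + 1 ∈ fill lam mu u v (sInf {r | 1 + 1 ∈ fill lam mu u v r j}) j :=
      Nat.sInf_mem (s := {r | 1 + 1 ∈ fill lam mu u v r j}) ⟨v j, mem_fill.2 ⟨h.2.1, by simp⟩⟩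
    rw [mem_fill] at this
    omega

theorem botA_eq {j : ℕ} (h : MixC lam mu (u j) (v j) j) :
    botA 1 (fill lam mu u v) j = u j - 1 := by
  unfold botA
  have hp := h.2.2.1
  refine IsGreatest.csSup_eq ⟨mem_fill.2 ⟨h.1, by simp [hp]⟩, ?_⟩
  intro r hr
  have := mem_fill.1 hr
  omega

theorem flip_fill (hl : IsPartitionFun lam) (hN : lam N = 0) (hN0 : 0 < N)
    (hg : ∀ j, GoodC lam mu N (u j) (v j) j) :
    flipT 1 (fill lam mu u v) =
      fill lam mu (fun j => if u j = 0 then N else if v j = N then 0 else u j)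
        (fun j => if u j = 0 then N else if v j = N then 0 else v j) := by
  funext i j
  have hlt : ∀ r, InShape lam mu r j → r < N := fun r h => InShape.ltN hl hN h
  by_cases hi : InShape lam mu i j
  · unfold flipT ColPureA ColPureB
    simp only [Nat.reduceAdd, colHas1, colHas2]
    have hiN := hlt i hi
    rcases hg j with ⟨h1, h2⟩ | ⟨h1, h2⟩ | h
    · rw [if_neg (by rintro ⟨⟨r, _, h⟩, _⟩; omega), if_pos ⟨⟨i, hi, by omega⟩, by rintro ⟨r, _, h⟩; omega⟩]
      ext x
      simp only [Finset.mem_image, mem_fill]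
      simp [h1, h2, hi, hiN, hiN.not_ge, eq_comm]
    · rw [if_pos ⟨⟨i, hi, by omega⟩, by rintro ⟨r, h3, h⟩; have := hlt r h3; omega⟩]
      ext x
      simp only [Finset.mem_image, mem_fill]
      simp [h1, h2, hi, hiN, hiN.not_ge, hN0.ne', eq_comm]
    · have hv := hlt _ h.2.1
      have hu := h.2.2.1
      have e1 : ∃ r, InShape lam mu r j ∧ r < u j := ⟨_, h.1, by omega⟩
      have e2 : ∃ r, InShape lam mu r j ∧ v j ≤ r := ⟨_, h.2.1, le_rfl⟩
      rw [if_neg (fun h => h.2 e2), if_neg (fun h => h.2 e1)]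
      ext x
      simp only [mem_fill]
      rw [if_neg (by omega), if_neg (by omega), if_neg (by omega), if_neg (by omega)]
  · have e : fill lam mu u v i j = ∅ := by ext x; simp [mem_fill, hi]
    unfold flipT
    rw [e]
    ext x
    simp [mem_fill, hi]

/-- swap -/
def sw (k j : ℕ) : ℕ := if j = k then k + 1 else if j = k + 1 then k else j

/-- configuration at a resolvable descent -/
def Conf (lam mu : ℕ → ℕ) (N : ℕ) (u v : ℕ → ℕ) (k : ℕ) : Prop :=
  (MixC lam mu (u k) (v k) k ∧ MixC lam mu (u k) (v k) (k + 1) ∧ u (k + 1) = N ∧ v (k + 1) = N) ∨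
  (u k = 0 ∧ v k = 0 ∧ MixC lam mu (u (k + 1)) (v (k + 1)) (k + 1) ∧
    MixC lam mu (u (k + 1)) (v (k + 1)) k) ∨
  (u k = 0 ∧ v k = 0 ∧ u (k + 1) = N ∧ v (k + 1) = N ∧
    ∃ r, InShape lam mu r k ∧ InShape lam mu r (k + 1))

theorem Conf.descent (hl : IsPartitionFun lam) (hN : lam N = 0) {k : ℕ}
    (h : Conf lam mu N u v k) : Descent 1 (fill lam mu u v) k := by
  have hlt : ∀ r j, InShape lam mu r j → r < N := fun r j h => InShape.ltN hl hN h
  rcases h with ⟨h1, h2, h3, h4⟩ | ⟨h1, h2, h3, h4⟩ | ⟨h1, h2, h3, h4, r, h5, h6⟩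
  · exact ⟨v k, mem_fill.2 ⟨h1.2.1, by simp⟩, mem_fill.2 ⟨h2.2.1, by
      have := hlt _ _ h2.2.1
      omega⟩⟩
  · exact ⟨u (k + 1) - 1, mem_fill.2 ⟨h4.1, by simp [h2]⟩, mem_fill.2 ⟨h3.1, by
      have := h3.2.2.1
      omega⟩⟩
  · exact ⟨r, mem_fill.2 ⟨h5, by simp [h2]⟩, mem_fill.2 ⟨h6, by
      have := hlt _ _ h5
      omega⟩⟩

theorem Conf.res (hl : IsPartitionFun lam) (hN : lam N = 0) {k : ℕ}
    (h : Conf lam mu N u v k) :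
    resFun 1 (fill lam mu u v) k =
      fill lam mu (fun j => u (sw k j)) (fun j => v (sw k j)) := by
  have hlt : ∀ r j, InShape lam mu r j → r < N := fun r j h => InShape.ltN hl hN h
  have emp : ∀ i j, ¬ InShape lam mu i j → fill lam mu u v i j = ∅ := by
    intro i j hi
    ext x; simp [mem_fill, hi]
  have nonem : ∀ i j, (v j ≤ u j) → InShape lam mu i j → (fill lam mu u v i j).Nonempty := by
    intro i j hj hi
    by_cases hc : i < u j
    · exact ⟨1, mem_fill.2 ⟨hi, by simp [hc]⟩⟩
    · exact ⟨2, mem_fill.2 ⟨hi, by simp; omega⟩⟩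
  have other : ∀ i j, j ≠ k → j ≠ k + 1 → fill lam mu u v i j =
      fill lam mu (fun j => u (sw k j)) (fun j => v (sw k j)) i j := by
    intro i j h1 h2
    ext x; simp [mem_fill, sw, h1, h2]
  have img : ∀ i j c, (v j ≤ u j) → (c = 1 ∨ c = 2) →
      ∀ x, x ∈ (fill lam mu u v i j).image (fun _ => c) ↔ InShape lam mu i j ∧ x = c := by
    intro i j c hj hc x
    by_cases hi : InShape lam mu i j
    · rw [Finset.image_const (nonem i j hj hi)]; simp [hi]
    · rw [emp i j hi]; simp [hi]
  have mm : ∀ j, MixC lam mu (u j) (v j) j → ColMixed 1 (fill lam mu u v) j := fun j hj =>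
    (mixed_iff hl hN (Or.inr (Or.inr hj))).2 hj
  have pA : ∀ r j, u j = N → v j = N → InShape lam mu r j → ColPureA 1 (fill lam mu u v) j := by
    intro r j h1 h2 h3
    refine ⟨colHas1.2 ⟨r, h3, by have := hlt _ _ h3; omega⟩, ?_⟩
    intro hc
    obtain ⟨s, h4, h5⟩ := colHas2.1 hc
    have := hlt _ _ h4
    omega
  have pB : ∀ r j, u j = 0 → v j = 0 → InShape lam mu r j → ColPureB 1 (fill lam mu u v) j := by
    intro r j h1 h2 h3
    refine ⟨colHas2.2 ⟨r, h3, by omega⟩, ?_⟩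
    intro hc
    obtain ⟨s, h4, h5⟩ := colHas1.1 hc
    omega
  funext i j
  unfold resFun
  have hki := hlt i k
  have hki' := hlt i (k+1)
  rcases h with ⟨h1, h2, h3, h4⟩ | ⟨h1, h2, h3, h4⟩ | ⟨h1, h2, h3, h4, r, h5, h6⟩
  · rw [if_pos ⟨mm _ h1, pA _ _ h3 h4 h2.1⟩]
    rw [sep_eq h1]
    obtain ⟨a1, a2, a3, a4, a5⟩ := h1
    obtain ⟨b1, b2, b3, b4, b5⟩ := h2
    split_ifs with c1 c2 c3 c4 c5
    · subst c1
      ext x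
      rw [img _ _ _ a4 (Or.inl rfl), mem_fill]
      simp only [sw, if_true, h3, h4]
      grind
    · subst c2
      obtain ⟨y, hy⟩ := c3
      have hy := (mem_fill.1 hy).1
      ext x
      rw [mem_fill]
      simp [sw]
      grind
    · subst c2
      obtain ⟨y, hy⟩ := c3
      have hy := (mem_fill.1 hy).1
      ext x
      rw [mem_fill, mem_fill]
      simp [sw]
      grind
    · subst c2
      obtain ⟨y, hy⟩ := c3
      have hy := (mem_fill.1 hy).1
      ext x
      rw [mem_fill]
      simp [sw]
      grind
    · subst c2
      have : ¬ InShape lam mu i (k + 1) := fun hh => c3 (nonem _ _ (by omega) hh)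
      ext x; simp [mem_fill, this]
    · exact other i j c1 c2
  · have nm : ¬ ColMixed 1 (fill lam mu u v) k := fun hc => (pB _ _ h1 h2 h4.1).2 hc.1
    rw [if_neg (fun hc => nm hc.1), if_pos ⟨pB _ _ h1 h2 h4.1, mm _ h3⟩]
    rw [botA_eq h3]
    obtain ⟨a1, a2, a3, a4, a5⟩ := h3
    obtain ⟨b1, b2, b3, b4, b5⟩ := h4
    split_ifs with c1 c2 c3 c4 c5
    · subst c1
      obtain ⟨y, hy⟩ := c2
      have hy := (mem_fill.1 hy).1
      ext x
      rw [mem_fill]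
      simp [sw]
      grind
    · subst c1
      obtain ⟨y, hy⟩ := c2
      have hy := (mem_fill.1 hy).1
      ext x
      rw [mem_fill, mem_fill]
      simp [sw]
      grind
    · subst c1
      obtain ⟨y, hy⟩ := c2
      have hy := (mem_fill.1 hy).1
      ext x
      rw [mem_fill]
      simp [sw]
      grind
    · subst c1
      have : ¬ InShape lam mu i j := fun hh => c2 (nonem _ _ (by omega) hh)
      ext x; simp [mem_fill, this]
    · subst c5
      ext x
      rw [img _ _ _ a4 (Or.inr rfl), mem_fill]
      simp [sw, h1, h2]
    · exact other i j c1 c5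
  · have pk := pB _ _ h1 h2 h5
    have pk1 := pA _ _ h3 h4 h6
    rw [if_neg (fun hc => pk.2 hc.1.1), if_neg (fun hc => pk1.2 hc.2.2), if_pos ⟨pk, pk1⟩]
    split_ifs with c1 c2
    · subst c1
      ext x
      rw [img _ _ _ (by omega) (Or.inl rfl), mem_fill]
      simp only [sw, if_true, h3, h4]
      grind
    · subst c2
      ext x
      rw [img _ _ _ (by omega) (Or.inr rfl), mem_fill]
      simp [sw, h1, h2]
    · exact other i j c1 c2
end

section
variable {lam mu u v : ℕ → ℕ} {N : ℕ}

/-- global benign condition -/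
def BG (lam mu u v : ℕ → ℕ) : Prop := ∀ j j', j < j' → MixC lam mu (u j) (v j) j →
  MixC lam mu (u j') (v j') j' → v j' ≤ v j ∧ (u j' = v j' + 1 → v j' < v j)

theorem ex12_iff {j : ℕ} (h : MixC lam mu (u j) (v j) j) :
    (∃ i, fill lam mu u v i j = ({1, 2} : Finset ℕ)) ↔ u j = v j + 1 := by
  obtain ⟨a1, a2, a3, a4, a5⟩ := h
  constructor
  · rintro ⟨i, hi⟩
    have h1 : 1 ∈ fill lam mu u v i j := by rw [hi]; simp
    have h2 : 2 ∈ fill lam mu u v i j := by rw [hi]; simp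
    rw [mem_fill] at h1 h2
    omega
  · intro h
    refine ⟨v j, ?_⟩
    ext x
    rw [mem_fill]
    simp [a2, h]

theorem benign_iff (hl : IsPartitionFun lam) (hN : lam N = 0)
    (hg : ∀ j, GoodC lam mu N (u j) (v j) j) :
    Benign (fill lam mu u v) ↔ BG lam mu u v := by
  constructor
  · intro hB j j' hjj h h'
    induction j' using Nat.strong_induction_on with
    | _ j' ih =>
    by_cases hc : ∃ m, j < m ∧ m < j' ∧ MixC lam mu (u m) (v m) m
    · obtain ⟨m0, hm0⟩ := hc
      let P : ℕ → Prop := fun m => j < m ∧ m < j' ∧ MixC lam mu (u m) (v m) m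
      have hm : P (Nat.findGreatest P j') := Nat.findGreatest_spec (P := P) hm0.2.1.le hm0
      have hmax : ∀ n, Nat.findGreatest P j' < n → n ≤ j' → ¬ P n :=
        fun n h1 h2 => Nat.findGreatest_is_greatest h1 h2
      generalize Nat.findGreatest P j' = m at hm hmax
      obtain ⟨hm1, hm2, hm3⟩ := hm
      have e1 := ih m hm2 hm1 hm3
      have e2 := hB m j' hm2 ((mixed_iff hl hN (hg _)).2 hm3) ((mixed_iff hl hN (hg _)).2 h')
        (fun n h1 h2 hn => hmax n h1 h2.le ⟨by omega, h2, (mixed_iff hl hN (hg _)).1 hn⟩)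
      rw [sep_eq h', sep_eq hm3, ex12_iff h'] at e2
      exact ⟨e2.1.trans e1.1, fun hh => (e2.2 hh).trans_le e1.1⟩
    · have e2 := hB j j' hjj ((mixed_iff hl hN (hg _)).2 h) ((mixed_iff hl hN (hg _)).2 h')
        (fun n h1 h2 hn => hc ⟨n, h1, h2, (mixed_iff hl hN (hg _)).1 hn⟩)
      rwa [sep_eq h', sep_eq h, ex12_iff h'] at e2
  · intro hB j j' hjj h h' _
    rw [mixed_iff hl hN (hg _)] at h h'
    rw [sep_eq h', sep_eq h, ex12_iff h']
    exact hB j j' hjj h h'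

theorem conf_of_descent (hl : IsPartitionFun lam) (hm : IsPartitionFun mu) (hN : lam N = 0)
    (hg : ∀ j, GoodC lam mu N (u j) (v j) j) (hB : BG lam mu u v) {k : ℕ}
    (hd : Descent 1 (fill lam mu u v) k) : Conf lam mu N u v k := by
  obtain ⟨r, h1, h2⟩ := hd
  rw [mem_fill] at h1 h2
  obtain ⟨s1, h1⟩ := h1
  obtain ⟨s2, h2⟩ := h2
  have h1 : v k ≤ r := by omega
  have h2 : r < u (k + 1) := by omega
  have hr := InShape.ltN hl hN s1
  rcases hg k with a | a | a
  · rcases hg (k + 1) with b | b | b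
    · omega
    · exact Or.inr (Or.inr ⟨a.1, a.2, b.1, b.2, r, s1, s2⟩)
    · refine Or.inr (Or.inl ⟨a.1, a.2, b, ?_⟩)
      obtain ⟨b1, b2, b3, b4, b5⟩ := b
      exact ⟨(InShape.corner hl hm s1 b1 (by omega)).2, (InShape.corner hl hm s1 b2 (by omega)).2,
        b3, b4, b5⟩
  · omega
  · rcases hg (k + 1) with b | b | b
    · omega
    · refine Or.inl ⟨a, ?_, b.1, b.2⟩
      obtain ⟨b1, b2, b3, b4, b5⟩ := a
      exact ⟨(InShape.corner hl hm b1 s2 (by omega)).1, (InShape.corner hl hm b2 s2 (by omega)).1,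
        b3, b4, b5⟩
    · have := hB k (k + 1) (by omega) a b
      have := b.2.2.2
      omega

theorem sw_sw (k j : ℕ) : sw k (sw k j) = j := by
  unfold sw
  split_ifs <;> omega

theorem sw_k (k : ℕ) : sw k k = k + 1 := by simp [sw]

theorem sw_k1 (k : ℕ) : sw k (k + 1) = k := by simp [sw]

theorem sw_cases (k j : ℕ) : (j = k ∧ sw k j = k + 1) ∨ (j = k + 1 ∧ sw k j = k) ∨
    (j ≠ k ∧ j ≠ k + 1 ∧ sw k j = j) := by
  unfold sw
  split_ifs <;> omega

theorem ncard_sw (k : ℕ) {P Q : ℕ → Prop} (h : ∀ j, P j ↔ Q (sw k j)) :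
    Set.ncard {j | P j} = Set.ncard {j | Q j} := by
  have : {j | P j} = sw k '' {j | Q j} := by
    ext j
    simp only [Set.mem_setOf_eq, Set.mem_image]
    constructor
    · intro hj
      exact ⟨sw k j, (h j).1 hj, sw_sw k j⟩
    · rintro ⟨i, hi, rfl⟩
      rw [h, sw_sw]
      exact hi
  rw [this]
  exact Set.ncard_image_of_injective _ (fun a b hab => by rw [← sw_sw k a, hab, sw_sw])

/-- mixedness is transported by the swap (in both shapes) -/
theorem Conf.mix (hl : IsPartitionFun lam) (hN : lam N = 0) (hN0 : 0 < N) {k : ℕ}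
    (h : Conf lam mu N u v k) (j : ℕ) :
    (MixC lam mu (u (sw k j)) (v (sw k j)) j ↔
      MixC lam mu (u (sw k j)) (v (sw k j)) (sw k j)) := by
  have z : ∀ q j, ¬ MixC lam mu 0 q j := fun q j h => absurd h.2.2.1 (by omega)
  have n : ∀ p j, ¬ MixC lam mu p N j := fun p j h =>
    absurd (InShape.ltN hl hN h.2.1) (by omega)
  rcases sw_cases k j with ⟨rfl, e⟩ | ⟨rfl, e⟩ | ⟨_, _, e⟩
  · rw [e]
    rcases h with ⟨h1, h2, h3, h4⟩ | ⟨h1, h2, h3, h4⟩ | ⟨h1, h2, h3, h4, r, h5, h6⟩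
    · simp [h4, n]
    · simp [h3, h4]
    · simp [h4, n]
  · rw [e]
    rcases h with ⟨h1, h2, h3, h4⟩ | ⟨h1, h2, h3, h4⟩ | ⟨h1, h2, h3, h4, r, h5, h6⟩
    · simp [h1, h2]
    · simp [h1, z]
    · simp [h1, z]
  · rw [e]

theorem Conf.good (hl : IsPartitionFun lam) (hN : lam N = 0) (hN0 : 0 < N) {k : ℕ}
    (h : Conf lam mu N u v k) (hg : ∀ j, GoodC lam mu N (u j) (v j) j) (j : ℕ) :
    GoodC lam mu N (u (sw k j)) (v (sw k j)) j := by
  rcases hg (sw k j) with a | a | a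
  · exact Or.inl a
  · exact Or.inr (Or.inl a)
  · exact Or.inr (Or.inr ((h.mix hl hN hN0 j).2 a))

theorem Conf.nonempty {k : ℕ}
    (h : Conf lam mu N u v k) :
    ∃ r, InShape lam mu r k ∧ InShape lam mu r (k + 1) := by
  rcases h with ⟨h1, h2, h3, h4⟩ | ⟨h1, h2, h3, h4⟩ | ⟨h1, h2, h3, h4, r, h5, h6⟩
  · exact ⟨_, h1.1, h2.1⟩
  · exact ⟨_, h4.1, h3.1⟩
  · exact ⟨_, h5, h6⟩

theorem good_has (hl : IsPartitionFun lam) (hN : lam N = 0) (hN0 : 0 < N) {j : ℕ}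
    (hg : GoodC lam mu N (u j) (v j) j) (hne : ∃ r, InShape lam mu r j) :
    (ColHas (fill lam mu u v) j 1 ↔ 0 < u j) ∧ (ColHas (fill lam mu u v) j 2 ↔ v j < N) := by
  rw [colHas1, colHas2]
  obtain ⟨s, hs⟩ := hne
  have hsN := InShape.ltN hl hN hs
  refine ⟨⟨?_, ?_⟩, ⟨?_, ?_⟩⟩
  · rintro ⟨r, _, h⟩; omega
  · intro h
    rcases hg with a | a | a
    · omega
    · exact ⟨s, hs, by omega⟩
    · exact ⟨_, a.1, by omega⟩
  · rintro ⟨r, hr, h⟩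
    have := InShape.ltN hl hN hr
    omega
  · intro h
    rcases hg with a | a | a
    · exact ⟨s, hs, by omega⟩
    · omega
    · exact ⟨_, a.2.1, le_rfl⟩

theorem Conf.has (hl : IsPartitionFun lam) (hN : lam N = 0) (hN0 : 0 < N) {k : ℕ}
    (h : Conf lam mu N u v k) (hg : ∀ j, GoodC lam mu N (u j) (v j) j) (j x : ℕ) :
    ColHas (fill lam mu (fun j => u (sw k j)) (fun j => v (sw k j))) j x ↔
      ColHas (fill lam mu u v) (sw k j) x := by
  by_cases hx : x = 1 ∨ x = 2
  · rcases sw_cases k j with ⟨hj, e⟩ | ⟨hj, e⟩ | ⟨_, _, e⟩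
    · have hr1 : ∃ r, InShape lam mu r j := by
        obtain ⟨r, a, b⟩ := h.nonempty
        exact ⟨r, hj ▸ a⟩
      have hr2 : ∃ r, InShape lam mu r (sw k j) := by
        obtain ⟨r, a, b⟩ := h.nonempty
        exact ⟨r, by rw [e]; exact b⟩
      have A := good_has hl hN hN0 (u := fun j => u (sw k j)) (v := fun j => v (sw k j))
        (h.good hl hN hN0 hg j) hr1
      have B := good_has hl hN hN0 (hg (sw k j)) hr2
      rcases hx with rfl | rfl
      · rw [A.1, B.1]
      · rw [A.2, B.2]
    · have hr1 : ∃ r, InShape lam mu r j := by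
        obtain ⟨r, a, b⟩ := h.nonempty
        exact ⟨r, hj ▸ b⟩
      have hr2 : ∃ r, InShape lam mu r (sw k j) := by
        obtain ⟨r, a, b⟩ := h.nonempty
        exact ⟨r, by rw [e]; exact a⟩
      have A := good_has hl hN hN0 (u := fun j => u (sw k j)) (v := fun j => v (sw k j))
        (h.good hl hN hN0 hg j) hr1
      have B := good_has hl hN hN0 (hg (sw k j)) hr2
      rcases hx with rfl | rfl
      · rw [A.1, B.1]
      · rw [A.2, B.2]
    · unfold ColHas
      simp only [mem_fill, e]
  · unfold ColHas
    simp only [mem_fill]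
    grind

theorem ceq_fill (hlu : ∀ j, v j ≤ u j ∧ u j ≤ v j + 1) (i : ℕ) :
    ceq lam mu (fill lam mu u v) i =
      Set.ncard ({j | InShape lam mu i j ∧ InShape lam mu (i + 1) j} \
        {j | (InShape lam mu i j ∧ InShape lam mu (i + 1) j) ∧ u j = i + 1 ∧ v j = i + 1}) := by
  unfold ceq
  congr 1
  ext j
  have := hlu j
  simp only [Set.mem_diff, Set.mem_setOf_eq]
  constructor
  · rintro ⟨h1, h2, m, m1, m2, m3, m4⟩
    refine ⟨⟨h1, h2⟩, ?_⟩
    rintro ⟨_, h3, h4⟩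
    rw [mem_fill] at m1 m3
    omega
  · rintro ⟨⟨h1, h2⟩, h3⟩
    refine ⟨h1, h2, ?_⟩
    by_cases hv : v j ≤ i
    · refine ⟨2, mem_fill.2 ⟨h1, by omega⟩, ?_, mem_fill.2 ⟨h2, by omega⟩, ?_⟩
      · intro x hx
        rw [mem_fill] at hx
        omega
      · intro x hx
        rw [mem_fill] at hx
        omega
    · have : ¬ (u j = i + 1 ∧ v j = i + 1) := fun h => h3 ⟨⟨h1, h2⟩, h⟩
      refine ⟨1, mem_fill.2 ⟨h1, by omega⟩, ?_, mem_fill.2 ⟨h2, by omega⟩, ?_⟩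
      · intro x hx
        rw [mem_fill] at hx
        omega
      · intro x hx
        rw [mem_fill] at hx
        omega

theorem bad_iff (hl : IsPartitionFun lam) (hN : lam N = 0) {p q j i : ℕ}
    (hg : GoodC lam mu N p q j) :
    ((InShape lam mu i j ∧ InShape lam mu (i + 1) j) ∧ p = i + 1 ∧ q = i + 1) ↔
      (MixC lam mu p q j ∧ p = i + 1 ∧ q = i + 1) := by
  constructor
  · rintro ⟨⟨h1, h2⟩, rfl, rfl⟩
    exact ⟨⟨h1, h2, by omega, by omega, by omega⟩, rfl, rfl⟩
  · rintro ⟨h, rfl, rfl⟩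
    exact ⟨⟨h.1, h.2.1⟩, rfl, rfl⟩

theorem exv_fill (hl : IsPartitionFun lam) (hN : lam N = 0)
    (hg : ∀ j, GoodC lam mu N (u j) (v j) j) (i : ℕ) :
    exv lam mu (fill lam mu u v) i =
      Set.ncard {j | MixC lam mu (u j) (v j) j ∧ u j = i + 1 ∧ v j = i} := by
  unfold exv
  have : {j | MixC lam mu (u j) (v j) j ∧ u j = i + 1 ∧ v j = i} =
      (((Finset.Ico (mu i) (lam i)).filter (fun j => u j = i + 1 ∧ v j = i) : Finset ℕ) : Set ℕ) := by
    ext j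
    simp only [Set.mem_setOf_eq, Finset.coe_filter, Finset.mem_Ico]
    constructor
    · rintro ⟨h, h1, h2⟩
      have := h.2.1
      rw [h2] at this
      exact ⟨this, h1, h2⟩
    · rintro ⟨h, h1, h2⟩
      refine ⟨?_, h1, h2⟩
      rw [h1, h2]
      exact ⟨h, h, by omega, by omega, by omega⟩
  rw [this, Set.ncard_coe_finset, Finset.card_filter]
  apply Finset.sum_congr rfl
  intro j hj
  have hs : InShape lam mu i j := Finset.mem_Ico.1 hj
  have := (hg j).le
  split_ifs with h
  · have : fill lam mu u v i j = {1, 2} := by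
      ext x
      rw [mem_fill]
      simp [hs, h]
    rw [this]
    rfl
  · have : (fill lam mu u v i j).card ≤ 1 := by
      rw [Finset.card_le_one]
      intro a ha b hb
      rw [mem_fill] at ha hb
      omega
    omega

theorem ell_lt {f g : ℕ → ℕ} {M k : ℕ} (hf : ∀ j, M ≤ j → f j = 0) (hk : k + 1 < M)
    (hg : ∀ j, g j = f (sw k j)) (hlt : f k < f (k + 1)) :
    ∑ᶠ j : ℕ, (j + 1) * g j < ∑ᶠ j : ℕ, (j + 1) * f j := by
  have e : ∀ h : ℕ → ℕ, (∀ j, M ≤ j → h j = 0) →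
      ∑ᶠ j : ℕ, (j + 1) * h j = (k + 1) * h k + ((k + 2) * h (k + 1) +
        ∑ j ∈ ((Finset.range M).erase k).erase (k + 1), (j + 1) * h j) := by
    intro h hh
    rw [finsum_eq_sum_of_support_subset (s := Finset.range M)]
    · rw [← Finset.add_sum_erase _ _ (a := k) (by simp; omega),
        ← Finset.add_sum_erase _ _ (a := k + 1) (by simp; omega)]
    · intro j hj
      by_contra hc
      apply hj
      simp only [Finset.coe_range, Set.mem_Iio, not_lt] at hc
      simp [hh j hc]
  rw [e f hf, e g (fun j hj => by
    rw [hg]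
    apply hf
    rcases sw_cases k j with h | h | h <;> omega)]
  have : ∑ j ∈ ((Finset.range M).erase k).erase (k + 1), (j + 1) * g j =
      ∑ j ∈ ((Finset.range M).erase k).erase (k + 1), (j + 1) * f j := by
    apply Finset.sum_congr rfl
    intro j hj
    simp only [Finset.mem_erase] at hj
    rw [hg]
    rcases sw_cases k j with h | h | h
    · omega
    · omega
    · rw [h.2.2]
  rw [this, hg, hg, sw_k, sw_k1]
  nlinarith

theorem Conf.flip_sw (hl : IsPartitionFun lam) (hN : lam N = 0) (hN0 : 0 < N) {k : ℕ}
    (h : Conf lam mu N u v k) :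
    Conf lam mu N
      (fun j => if u (sw k j) = 0 then N else if v (sw k j) = N then 0 else u (sw k j))
      (fun j => if u (sw k j) = 0 then N else if v (sw k j) = N then 0 else v (sw k j)) k := by
  unfold Conf
  simp only [sw_k, sw_k1]
  have mx : ∀ p q j, MixC lam mu p q j → p ≠ 0 ∧ q ≠ N := fun p q j h =>
    ⟨h.2.2.1.ne', (InShape.ltN hl hN h.2.1).ne⟩
  rcases h with ⟨h1, h2, h3, h4⟩ | ⟨h1, h2, h3, h4⟩ | ⟨h1, h2, h3, h4, h5⟩
  · refine Or.inr (Or.inl ?_)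
    have := mx _ _ _ h1
    simp [h3, h4, this, h1, h2, hN0.ne']
  · refine Or.inl ?_
    have := mx _ _ _ h3
    simp [h1, this, h3, h4]
  · refine Or.inr (Or.inr ?_)
    simp [h1, h3, h4, h5, hN0.ne']

theorem main_fill (hl : IsPartitionFun lam) (hm : IsPartitionFun mu) (hN : lam N = 0)
    (hN0 : 0 < N) (hg : ∀ j, GoodC lam mu N (u j) (v j) j) (hB : BG lam mu u v) {k : ℕ}
    (h : Conf lam mu N u v k) (T T' : ℕ → ℕ → Finset ℕ) (eT : T = fill lam mu u v)
    (eT' : T' = fill lam mu (fun j => u (sw k j)) (fun j => v (sw k j))) :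
    (Is12SVTable lam mu T' ∧ Benign T' ∧
      (∀ r, ceq lam mu T' r = ceq lam mu T r) ∧
      (∀ r, exv lam mu T' r = exv lam mu T r) ∧
      (∀ v, ircont T' v = ircont T v)) ∧
    (Descent 1 (flipT 1 T') k ∧ resFun 1 (flipT 1 T') k = flipT 1 T) ∧
    ellStat 1 T' < ellStat 1 T := by
  have hg' := h.good hl hN hN0 hg
  have hmix := h.mix hl hN hN0
  have hfin : ∀ i, {j | InShape lam mu i j}.Finite := fun i =>
    (Set.finite_Iio (lam i)).subset (fun j hj => hj.2)
  have hhas : ∀ j x, ColHas T' j x ↔ ColHas T (sw k j) x := by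
    subst eT eT'
    exact h.has hl hN hN0 hg
  refine ⟨⟨?_, ?_, ?_, ?_, ?_⟩, ⟨?_, ?_⟩, ?_⟩
  · rw [eT']
    exact fill_table (fun j => (hg' j).le)
  · rw [eT', benign_iff hl hN hg']
    intro j j' hjj h1 h2
    have h1 := (hmix j).1 h1
    have h2 := (hmix j').1 h2
    refine hB _ _ ?_ h1 h2
    by_contra hc
    have hj : j = k ∧ j' = k + 1 := by
      rcases sw_cases k j with a | a | a <;> rcases sw_cases k j' with b | b | b <;> omega
    rw [hj.1, sw_k] at h1
    rw [hj.2, sw_k1] at h2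
    have h3 := InShape.ltN hl hN h1.2.1
    have h4 := h2.2.2.1
    rcases h with ⟨_, _, _, _⟩ | ⟨_, _, _, _⟩ | ⟨_, _, _, _, _⟩ <;> omega
  · intro i
    rw [eT, eT', ceq_fill (fun j => (hg j).le), ceq_fill (fun j => (hg' j).le)]
    have fS : {j | InShape lam mu i j ∧ InShape lam mu (i + 1) j}.Finite :=
      (hfin i).subset (fun j hj => hj.1)
    rw [Set.ncard_diff (fun j hj => hj.1) (fS.subset (fun j hj => hj.1)),
      Set.ncard_diff (fun j hj => hj.1) (fS.subset (fun j hj => hj.1))]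
    congr 1
    apply ncard_sw k
    intro j
    rw [bad_iff hl hN (hg' j), bad_iff hl hN (hg (sw k j)), hmix]
  · intro i
    rw [eT, eT', exv_fill hl hN hg, exv_fill hl hN hg']
    apply ncard_sw k
    intro j
    rw [hmix]
  · intro x
    exact ncard_sw k (fun j => hhas j x)
  · rw [eT', flip_fill hl hN hN0 hg']
    exact (h.flip_sw hl hN hN0).descent hl hN
  · rw [eT', flip_fill hl hN hN0 hg', (h.flip_sw hl hN hN0).res hl hN, eT,
      flip_fill hl hN hN0 hg]
    simp only [sw_sw]
  · have hne := h.nonempty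
    have hsig : ∀ j, sig 1 T' j = sig 1 T (sw k j) := by
      intro j
      unfold sig ColPureA ColMixed
      simp only [hhas]
      congr
    refine ell_lt (M := lam 0 + k + 2) (k := k) ?_ (by omega) hsig ?_
    · intro j hj
      have : ∀ x, ¬ ColHas T j x := by
        rintro x ⟨r, hr⟩
        rw [eT, mem_fill] at hr
        have h1 := hr.1.2
        have h2 := anti_of hl (Nat.zero_le r)
        omega
      simp [sig, ColPureA, ColMixed, this]
    · obtain ⟨r, hr1, hr2⟩ := hne
      have A := good_has hl hN hN0 (hg k) ⟨r, hr1⟩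
      have B := good_has hl hN hN0 (hg (k + 1)) ⟨r, hr2⟩
      unfold sig ColPureA ColMixed
      rw [eT]
      simp only [Nat.reduceAdd, A.1, A.2, B.1, B.2]
      have mx : ∀ p q j, MixC lam mu p q j → 0 < p ∧ q < N := fun p q j h =>
        ⟨h.2.2.1, InShape.ltN hl hN h.2.1⟩
      rcases h with ⟨h1, h2, h3, h4⟩ | ⟨h1, h2, h3, h4⟩ | ⟨h1, h2, h3, h4, h5⟩
      · have := mx _ _ _ h1
        simp [this, h3, h4, hN0, this.2.not_ge]
      · have := mx _ _ _ h3
        simp [this, h1, h2, this.2.not_ge]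
      · simp [h1, h2, h3, h4, hN0]
end

/-- Let `T` be a benign 12-SV table of shape `lam/mu` and `k` a descent of
`T`. Then (1) `res_k T` is again a benign 12-SV table with the same `ceq`, `ex` and `ircont`
statistics; (2) `k` is a descent of `flip (res_k T)` and `res_k (flip (res_k T)) = flip T`;
(3) `ℓ(T) > ℓ(res_k T)`. -/
theorem resolution_properties (lam mu : ℕ → ℕ)
    (hlam : IsPartitionFun lam) (hmu : IsPartitionFun mu) (hsub : ∀ r, mu r ≤ lam r)
    (T : ℕ → ℕ → Finset ℕ) (hT : Is12SVTable lam mu T) (hB : Benign T)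
    (k : ℕ) (hk : Descent 1 T k) :
    (Is12SVTable lam mu (resFun 1 T k) ∧ Benign (resFun 1 T k) ∧
      (∀ r, ceq lam mu (resFun 1 T k) r = ceq lam mu T r) ∧
      (∀ r, exv lam mu (resFun 1 T k) r = exv lam mu T r) ∧
      (∀ v, ircont (resFun 1 T k) v = ircont T v)) ∧
    (Descent 1 (flipT 1 (resFun 1 T k)) k ∧
      resFun 1 (flipT 1 (resFun 1 T k)) k = flipT 1 T) ∧
    ellStat 1 (resFun 1 T k) < ellStat 1 T := by
  obtain ⟨N, hN⟩ := hlam.2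
  have hN1 : lam (N + 1) = 0 := hN _ (by omega)
  obtain ⟨u, v, eT, hg⟩ := exists_fill hlam hmu hT hN1
  have hBG : BG lam mu u v := (benign_iff hlam hN1 hg).1 (eT ▸ hB)
  have hC : Conf lam mu (N + 1) u v k := conf_of_descent hlam hmu hN1 hg hBG (eT ▸ hk)
  exact main_fill hlam hmu hN1 (Nat.succ_pos N) hg hBG hC T _ eT (by rw [eT, hC.res hlam hN1])
end

section
/- Let T, P, Q be benign 12-SV tables of shape λ/μ with T → P and T → Q. Then there exists a benign 12-SV table T' of shape λ/μ with P →* T' and Q →* T'. -/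
open scoped Classical

namespace LC

theorem anti {f : ℕ → ℕ} (h : IsPartitionFun f) {i j : ℕ} (hij : i ≤ j) : f j ≤ f i :=
  antitone_nat_of_succ_le h.1 hij

/-- `OK` packages the partition hypotheses. -/
def OK (lam mu : ℕ → ℕ) : Prop := IsPartitionFun lam ∧ IsPartitionFun mu

theorem sq {lam mu : ℕ → ℕ} (h : OK lam mu) {r m s j j' : ℕ} (h1 : r ≤ m) (h2 : m ≤ s)
    (hr : InShape lam mu r j) (hs : InShape lam mu s j') (hj : j ≤ j') :
    InShape lam mu m j ∧ InShape lam mu m j' := by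
  have a1 := anti h.1 h2
  have a2 := anti h.2 h1
  unfold InShape at *
  omega

section
variable {lam mu : ℕ → ℕ} {T : ℕ → ℕ → Finset ℕ}

theorem mem_shape (hT : Is12SVTable lam mu T) {x r j : ℕ} (h : x ∈ T r j) :
    InShape lam mu r j := by
  by_contra hc
  rw [hT.1 r j hc] at h
  simp at h

theorem mem_val (hT : Is12SVTable lam mu T) {x r j : ℕ} (h : x ∈ T r j) : x = 1 ∨ x = 2 := by
  have := (hT.2.1 r j (mem_shape hT h)).2 h
  simpa using this

theorem one_or_two (hT : Is12SVTable lam mu T) {r j : ℕ} (h : InShape lam mu r j) :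
    1 ∈ T r j ∨ 2 ∈ T r j := by
  obtain ⟨x, hx⟩ := (hT.2.1 r j h).1
  rcases mem_val hT hx with rfl | rfl <;> simp [hx]

theorem eq_one (hT : Is12SVTable lam mu T) {r j : ℕ} (h : InShape lam mu r j)
    (h2 : 2 ∉ T r j) : T r j = {1} := by
  have h1 := one_or_two hT h
  ext x
  have := @mem_val _ _ _ hT x r j
  simp only [Finset.mem_singleton]
  grind

theorem eq_two (hT : Is12SVTable lam mu T) {r j : ℕ} (h : InShape lam mu r j)
    (h2 : 1 ∉ T r j) : T r j = {2} := by
  have h1 := one_or_two hT h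
  ext x
  have := @mem_val _ _ _ hT x r j
  simp only [Finset.mem_singleton]
  grind

theorem col_mono (ok : OK lam mu) (hT : Is12SVTable lam mu T) {r s j : ℕ}
    (h2 : 2 ∈ T r j) (h1 : 1 ∈ T s j) : s ≤ r := by
  by_contra hc
  push Not at hc
  have key : ∀ n, r + 1 + n ≤ s → 1 ∉ T (r + 1 + n) j := by
    intro n
    induction n with
    | zero =>
      intro hn h
      have := hT.2.2 r j (mem_shape hT h2) (mem_shape hT h) 2 h2 1 h
      omega
    | succ n ih =>
      intro hn h
      have hs := (sq ok (r := r) (m := r + 1 + n) (s := s) (by omega) (by omega)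
        (mem_shape hT h2) (mem_shape hT h1) le_rfl).1
      have h' := (one_or_two hT hs).resolve_left (ih (by omega))
      have := hT.2.2 (r + 1 + n) j hs (mem_shape hT h) 2 h' 1 h
      omega
  obtain ⟨n, rfl⟩ := Nat.exists_eq_add_of_le (Nat.succ_le_of_lt hc)
  exact key n le_rfl h1

theorem sep_mem {j : ℕ} (h : ColHas T j 2) : 2 ∈ T (sep 1 T j) j :=
  Nat.sInf_mem (s := {r : ℕ | 1 + 1 ∈ T r j}) (by obtain ⟨r, hr⟩ := h; exact ⟨r, hr⟩)

theorem sep_le {j r : ℕ} (h : 2 ∈ T r j) : sep 1 T j ≤ r :=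
  Nat.sInf_le (s := {r : ℕ | 1 + 1 ∈ T r j}) h

theorem sep_eq {j m : ℕ} (h : 2 ∈ T m j) (h' : ∀ r, 2 ∈ T r j → m ≤ r) : sep 1 T j = m :=
  le_antisymm (sep_le h) (h' _ (sep_mem ⟨m, h⟩))

theorem bot_bdd (ok : OK lam mu) (hT : Is12SVTable lam mu T) {j : ℕ} (h : ColMixed 1 T j) :
    BddAbove {r : ℕ | 1 ∈ T r j} := by
  obtain ⟨s, hs⟩ := h.2
  exact ⟨s, fun r hr => col_mono ok hT hs hr⟩

theorem bot_mem (ok : OK lam mu) (hT : Is12SVTable lam mu T) {j : ℕ} (h : ColMixed 1 T j) :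
    1 ∈ T (botA 1 T j) j :=
  Nat.sSup_mem (s := {r : ℕ | 1 ∈ T r j}) h.1 (bot_bdd ok hT h)

theorem le_bot (ok : OK lam mu) (hT : Is12SVTable lam mu T) {j r : ℕ} (h : ColMixed 1 T j)
    (hr : 1 ∈ T r j) : r ≤ botA 1 T j :=
  le_csSup (bot_bdd ok hT h) hr

end

/-- explicit (M1) -/
noncomputable def opM1 (lam mu : ℕ → ℕ) (T : ℕ → ℕ → Finset ℕ) (k : ℕ) : ℕ → ℕ → Finset ℕ :=
  fun r j =>
    if j = k then (if InShape lam mu r j then {1} else ∅)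
    else if j = k + 1 then
      (if InShape lam mu r (k + 1) then (if InShape lam mu r k then T r k else {1}) else ∅)
    else T r j

/-- explicit (2M) -/
noncomputable def op2M (lam mu : ℕ → ℕ) (T : ℕ → ℕ → Finset ℕ) (k : ℕ) : ℕ → ℕ → Finset ℕ :=
  fun r j =>
    if j = k + 1 then (if InShape lam mu r j then {2} else ∅)
    else if j = k then
      (if InShape lam mu r k then (if InShape lam mu r (k + 1) then T r (k + 1) else {2}) else ∅)
    else T r j

/-- explicit (21) -/
noncomputable def op21 (lam mu : ℕ → ℕ) (T : ℕ → ℕ → Finset ℕ) (k : ℕ) : ℕ → ℕ → Finset ℕ :=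
  fun r j =>
    if j = k then (if InShape lam mu r j then {1} else ∅)
    else if j = k + 1 then (if InShape lam mu r j then {2} else ∅)
    else T r j

section
variable {lam mu : ℕ → ℕ} {T : ℕ → ℕ → Finset ℕ}

theorem image_eq (hT : Is12SVTable lam mu T) (r j c : ℕ) :
    (T r j).image (fun _ => c) = if InShape lam mu r j then {c} else ∅ := by
  split_ifs with h
  · exact Finset.image_const (hT.2.1 r j h).1 c
  · rw [hT.1 r j h]; simp

theorem nonempty_iff (hT : Is12SVTable lam mu T) (r j : ℕ) :
    (T r j).Nonempty ↔ InShape lam mu r j := by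
  constructor
  · rintro ⟨x, hx⟩
    exact mem_shape hT hx
  · intro h
    exact (hT.2.1 r j h).1

theorem res_M1 (ok : OK lam mu) (hT : Is12SVTable lam mu T) {k : ℕ}
    (hk : ColMixed 1 T k) (hk1 : ColPureA 1 T (k + 1)) :
    resFun 1 T k = opM1 lam mu T k := by
  funext r j
  unfold resFun opM1
  rw [if_pos ⟨hk, hk1⟩]
  split_ifs with h1 h2 h3 h4 h5 h6 h7 h8 h9
  all_goals try rfl
  all_goals try (subst h1)
  all_goals try simp only [nonempty_iff hT] at *
  all_goals try simp only [image_eq hT] at *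
  all_goals try simp_all
  · exact (eq_one hT (by assumption) (fun h => absurd (sep_le h) (by omega))).symm
  · exact absurd (mem_shape hT (sep_mem hk.2)) (by assumption)
  · rename_i h
    exact (eq_two hT h (fun h' => absurd (col_mono ok hT (sep_mem hk.2) h') (by omega))).symm
  · rename_i h
    exact h ((sq ok (r := sep 1 T k) (m := r) (s := r) (by omega) le_rfl
      (mem_shape hT (sep_mem hk.2)) (by assumption) (Nat.le_succ k)).1)

theorem res_2M (ok : OK lam mu) (hT : Is12SVTable lam mu T) {k : ℕ}
    (hk : ColPureB 1 T k) (hk1 : ColMixed 1 T (k + 1)) :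
    resFun 1 T k = op2M lam mu T k := by
  have hb := bot_mem ok hT hk1
  have hl := fun r => @le_bot _ _ _ ok hT (k + 1) r hk1
  have hm := fun r => @col_mono _ _ _ ok hT r (botA 1 T (k + 1)) (k + 1)
  funext r j
  unfold resFun op2M
  rw [if_neg (fun h => hk.2 h.1.1), if_pos ⟨hk, hk1⟩]
  simp only [nonempty_iff hT, image_eq hT]
  by_cases h1 : j = k
  · subst h1
    by_cases hs : InShape lam mu r j
    · by_cases hs1 : InShape lam mu r (j + 1)
      · have e1 := @eq_one _ _ _ hT r (j + 1) hs1
        have e2 := @eq_two _ _ _ hT r (j + 1) hs1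
        have a := hl r
        have b := hm r
        simp [hs, hs1]
        split_ifs
        · exact (e1 (fun h => absurd (b h hb) (by omega))).symm
        · rfl
        · exact (e2 (fun h => absurd (a h) (by omega))).symm
      · have : ¬ r ≤ botA 1 T (j + 1) := fun h => hs1 ((sq ok (r := r) (m := r) le_rfl h
          hs (mem_shape hT hb) (Nat.le_succ j)).2)
        simp [hs, hs1]
        rw [if_neg (by omega), if_neg (by omega)]
    · simp [hs]
  · by_cases h2 : j = k + 1
    · subst h2; simp
    · simp [h1, h2]

theorem res_21 (hT : Is12SVTable lam mu T) {k : ℕ}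
    (hk : ColPureB 1 T k) (hk1 : ColPureA 1 T (k + 1)) :
    resFun 1 T k = op21 lam mu T k := by
  funext r j
  unfold resFun op21
  rw [if_neg (fun h => hk.2 h.1.1), if_neg (fun h => hk1.2 h.2.2), if_pos ⟨hk, hk1⟩]
  simp only [image_eq hT]

/-- non-consecutive form of benign -/
theorem benign_all (hB : Benign T) : ∀ n k k', k' = k + n → k < k' → ColMixed 1 T k →
    ColMixed 1 T k' → sep 1 T k' ≤ sep 1 T k ∧
    ((∃ i, T i k' = ({1, 2} : Finset ℕ)) → sep 1 T k' < sep 1 T k) := by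
  intro n
  induction n using Nat.strong_induction_on with
  | _ n ih =>
    intro k k' e hlt hk hk'
    by_cases hc : ∀ m, k < m → m < k' → ¬ ColMixed 1 T m
    · exact hB k k' hlt hk hk' hc
    · push Not at hc
      obtain ⟨m, h1, h2, h3⟩ := hc
      have a := ih (m - k) (by omega) k m (by omega) h1 hk h3
      have b := ih (k' - m) (by omega) m k' (by omega) h2 h3 hk'
      exact ⟨b.1.trans a.1, fun h => (b.2 h).trans_le a.1⟩

theorem benign_map {T' : ℕ → ℕ → Finset ℕ} (hB : Benign T) (f : ℕ → ℕ)
    (hf : ∀ j, ColMixed 1 T' j → ColMixed 1 T (f j) ∧ sep 1 T' j = sep 1 T (f j) ∧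
      ((∃ i, T' i j = ({1, 2} : Finset ℕ)) → ∃ i, T i (f j) = ({1, 2} : Finset ℕ)))
    (hm : ∀ i j, i < j → ColMixed 1 T' i → ColMixed 1 T' j → f i < f j) : Benign T' := by
  intro k k' hlt hk hk' _
  obtain ⟨a1, a2, a3⟩ := hf k hk
  obtain ⟨b1, b2, b3⟩ := hf k' hk'
  have hl := hm k k' hlt hk hk'
  have := benign_all hB (f k' - f k) (f k) (f k') (by omega) hl a1 b1
  rw [a2, b2]
  exact ⟨this.1, fun h => this.2 (b3 h)⟩

theorem cases_desc (ok : OK lam mu) (hT : Is12SVTable lam mu T) (hB : Benign T) {k : ℕ}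
    (hd : Descent 1 T k) :
    (ColMixed 1 T k ∧ ColPureA 1 T (k + 1)) ∨ (ColPureB 1 T k ∧ ColMixed 1 T (k + 1)) ∨
    (ColPureB 1 T k ∧ ColPureA 1 T (k + 1)) := by
  obtain ⟨r, h2, h1⟩ := hd
  have c2 : ColHas T k 2 := ⟨r, h2⟩
  have c1 : ColHas T (k + 1) 1 := ⟨r, h1⟩
  have key : ¬ (ColMixed 1 T k ∧ ColMixed 1 T (k + 1)) := by
    rintro ⟨m, m'⟩
    have hb := hB k (k + 1) (by omega) m m' (by intro m h h'; omega)
    have s := sep_le h2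
    have q := sep_mem m'.2
    have le := col_mono ok hT q h1
    have e : r = sep 1 T (k + 1) := by omega
    have : T r (k + 1) = {1, 2} := by
      rw [← e] at q
      ext x
      have := @mem_val _ _ _ hT x r (k + 1)
      simp only [Finset.mem_insert, Finset.mem_singleton]
      grind
    have := hb.2 ⟨r, this⟩
    omega
  unfold ColMixed ColPureA ColPureB at *
  norm_num at *
  tauto

theorem opM1_table (hT : Is12SVTable lam mu T) (ok : OK lam mu) (k : ℕ) :
    Is12SVTable lam mu (opM1 lam mu T k) := by
  refine ⟨?_, ?_, ?_⟩
  · intro i j h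
    have := hT.1 i j h
    unfold opM1
    grind
  · intro i j h
    have := hT.2.1 i j h
    have := hT.2.1 i k
    unfold opM1
    split_ifs <;> simp_all
  · intro i j h h'
    have a := hT.2.2 i j h h'
    have b := hT.2.2 i k
    have c : InShape lam mu i k → InShape lam mu (i + 1) (k + 1) → InShape lam mu (i + 1) k :=
      fun h1 h2 => (sq ok (r := i) (m := i + 1) (by omega) le_rfl h1 h2 (by omega)).1
    have d := fun x => @mem_val _ _ _ hT x (i + 1) k
    have d' := fun x => @mem_val _ _ _ hT x i k
    unfold opM1
    unfold FinsetLE at *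
    intro x hx y hy
    grind

theorem op2M_table (hT : Is12SVTable lam mu T) (ok : OK lam mu) (k : ℕ) :
    Is12SVTable lam mu (op2M lam mu T k) := by
  refine ⟨?_, ?_, ?_⟩
  · intro i j h
    have := hT.1 i j h
    unfold op2M
    grind
  · intro i j h
    have := hT.2.1 i j h
    have := hT.2.1 i (k + 1)
    unfold op2M
    split_ifs <;> simp_all
  · intro i j h h'
    have a := hT.2.2 i j h h'
    have b := hT.2.2 i (k + 1)
    have c : InShape lam mu i k → InShape lam mu (i + 1) (k + 1) → InShape lam mu i (k + 1) :=
      fun h1 h2 => (sq ok (r := i) (m := i) (s := i + 1) le_rfl (by omega) h1 h2 (by omega)).2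
    have d := fun x => @mem_val _ _ _ hT x (i + 1) (k + 1)
    have d' := fun x => @mem_val _ _ _ hT x i (k + 1)
    unfold op2M
    unfold FinsetLE at *
    intro x hx y hy
    grind

theorem op21_table (hT : Is12SVTable lam mu T) (k : ℕ) :
    Is12SVTable lam mu (op21 lam mu T k) := by
  refine ⟨?_, ?_, ?_⟩
  · intro i j h
    have := hT.1 i j h
    unfold op21
    grind
  · intro i j h
    have := hT.2.1 i j h
    unfold op21
    split_ifs <;> simp_all
  · intro i j h h'
    have a := hT.2.2 i j h h'
    unfold op21
    unfold FinsetLE at *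
    intro x hx y hy
    grind

/-- transfer between equal columns -/
theorem same_col {T' : ℕ → ℕ → Finset ℕ} {j j' : ℕ} (h : ∀ r, T' r j = T r j')
    (hm : ColMixed 1 T' j) : ColMixed 1 T j' ∧ sep 1 T' j = sep 1 T j' ∧
      ((∃ i, T' i j = ({1, 2} : Finset ℕ)) → ∃ i, T i j' = ({1, 2} : Finset ℕ)) := by
  unfold ColMixed ColHas sep at *
  simp only [h] at *
  exact ⟨hm, trivial, id⟩

theorem ne_pair1 : ({1} : Finset ℕ) ≠ {1, 2} := by decide
theorem ne_pair2 : ({2} : Finset ℕ) ≠ {1, 2} := by decide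
theorem ne_pair0 : (∅ : Finset ℕ) ≠ {1, 2} := by decide

theorem opM1_benign (hT : Is12SVTable lam mu T) (ok : OK lam mu) (hB : Benign T) {k : ℕ}
    (hd : Descent 1 T k) (hk : ColMixed 1 T k) :
    Benign (opM1 lam mu T k) := by
  have nk : ¬ ColMixed 1 (opM1 lam mu T k) k := by
    rintro ⟨_, r, hr⟩
    simp only [opM1, if_true] at hr
    split_ifs at hr <;> simp at hr
  refine benign_map hB (fun j => if j = k + 1 then k else j) ?_ ?_
  · intro j hj
    by_cases e : j = k + 1
    · subst e
      simp only [if_true]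
      have e : ∀ r, opM1 lam mu T k r (k + 1) = (if InShape lam mu r (k + 1) then
          (if InShape lam mu r k then T r k else {1}) else ∅) := by
        intro r; simp [opM1]
      obtain ⟨t, t2, t1⟩ := hd
      have hs := sep_mem hk.2
      refine ⟨hk, sep_eq ?_ ?_, ?_⟩
      · have := sq ok le_rfl (sep_le t2) (mem_shape hT hs) (mem_shape hT t1) (Nat.le_succ k)
        rw [e, if_pos this.2, if_pos this.1]
        exact hs
      · intro r hr
        rw [e] at hr
        split_ifs at hr
        · exact sep_le hr
        · simp at hr
        · simp at hr
      · rintro ⟨i, hi⟩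
        rw [e] at hi
        split_ifs at hi
        · exact ⟨i, hi⟩
        · exact absurd hi ne_pair1
        · exact absurd hi ne_pair0
    · rw [if_neg e]
      have : j ≠ k := by rintro rfl; exact nk hj
      exact same_col (by intro r; simp [opM1, e, this]) hj
  · intro i j hij hi hj
    have : i ≠ k := by rintro rfl; exact nk hi
    have : j ≠ k := by rintro rfl; exact nk hj
    grind

theorem op2M_benign (hT : Is12SVTable lam mu T) (ok : OK lam mu) (hB : Benign T) {k : ℕ}
    (hd : Descent 1 T k) (hk : ColMixed 1 T (k + 1)) :
    Benign (op2M lam mu T k) := by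
  have nk : ¬ ColMixed 1 (op2M lam mu T k) (k + 1) := by
    rintro ⟨⟨r, hr⟩, _⟩
    simp only [op2M, if_true] at hr
    split_ifs at hr <;> simp at hr
  refine benign_map hB (fun j => if j = k then k + 1 else j) ?_ ?_
  · intro j hj
    by_cases e : j = k
    · subst e
      simp only [if_true]
      have e : ∀ r, op2M lam mu T j r j = (if InShape lam mu r j then
          (if InShape lam mu r (j + 1) then T r (j + 1) else {2}) else ∅) := by
        intro r; simp [op2M]
      obtain ⟨t, t2, t1⟩ := hd
      have hs := sep_mem hk.2
      have hts := col_mono ok hT hs t1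
      refine ⟨hk, sep_eq ?_ ?_, ?_⟩
      · have := sq ok hts le_rfl (mem_shape hT t2) (mem_shape hT hs) (Nat.le_succ j)
        rw [e, if_pos this.1, if_pos this.2]
        exact hs
      · intro r hr
        rw [e] at hr
        split_ifs at hr with a b
        · exact sep_le hr
        · by_contra hc
          exact b (sq ok le_rfl (by omega : r ≤ sep 1 T (j + 1)) a (mem_shape hT hs)
            (Nat.le_succ j)).2
        · simp at hr
      · rintro ⟨i, hi⟩
        rw [e] at hi
        split_ifs at hi
        · exact ⟨i, hi⟩
        · exact absurd hi ne_pair2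
        · exact absurd hi ne_pair0
    · rw [if_neg e]
      have : j ≠ k + 1 := by rintro rfl; exact nk hj
      exact same_col (by intro r; simp [op2M, e, this]) hj
  · intro i j hij hi hj
    have : i ≠ k + 1 := by rintro rfl; exact nk hi
    have : j ≠ k + 1 := by rintro rfl; exact nk hj
    grind

theorem op21_benign (hB : Benign T) {k : ℕ} : Benign (op21 lam mu T k) := by
  have nk : ¬ ColMixed 1 (op21 lam mu T k) k := by
    rintro ⟨_, r, hr⟩
    simp only [op21, if_true] at hr
    split_ifs at hr <;> simp at hr
  have nk' : ¬ ColMixed 1 (op21 lam mu T k) (k + 1) := by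
    rintro ⟨⟨r, hr⟩, _⟩
    simp [op21] at hr
    split_ifs at hr <;> simp at hr
  refine benign_map hB id ?_ (fun i j h _ _ => h)
  intro j hj
  have : j ≠ k := by rintro rfl; exact nk hj
  have : j ≠ k + 1 := by rintro rfl; exact nk' hj
  exact same_col (by intro r; simp [op21, *]) hj

theorem res_good (ok : OK lam mu) (hT : Is12SVTable lam mu T) (hB : Benign T) {k : ℕ}
    (hd : Descent 1 T k) :
    Is12SVTable lam mu (resFun 1 T k) ∧ Benign (resFun 1 T k) := by
  rcases cases_desc ok hT hB hd with h | h | h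
  · rw [res_M1 ok hT h.1 h.2]
    exact ⟨opM1_table hT ok k, opM1_benign hT ok hB hd h.1⟩
  · rw [res_2M ok hT h.1 h.2]
    exact ⟨op2M_table hT ok k, op2M_benign hT ok hB hd h.2⟩
  · rw [res_21 hT h.1 h.2]
    exact ⟨op21_table hT k, op21_benign hB⟩

theorem res_off {k r j : ℕ} (h : j ≠ k) (h' : j ≠ k + 1) : resFun 1 T k r j = T r j := by
  unfold resFun
  simp [h, h']

theorem res_congr {S : ℕ → ℕ → Finset ℕ} {k : ℕ} (h : ∀ r, S r k = T r k)
    (h' : ∀ r, S r (k + 1) = T r (k + 1)) (r j : ℕ) (hj : S r j = T r j) :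
    resFun 1 S k r j = resFun 1 T k r j := by
  unfold resFun ColMixed ColPureA ColPureB ColHas sep botA
  simp only [h, h', hj]
  congr!

theorem desc_congr {S : ℕ → ℕ → Finset ℕ} {k : ℕ} (h : ∀ r, S r k = T r k)
    (h' : ∀ r, S r (k + 1) = T r (k + 1)) (hd : Descent 1 T k) : Descent 1 S k := by
  unfold Descent at *
  simpa only [h, h'] using hd

theorem far (ok : OK lam mu) (hT : Is12SVTable lam mu T) (hB : Benign T) {u v : ℕ}
    (huv : u + 2 ≤ v) (hu : Descent 1 T u) (hv : Descent 1 T v) :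
    ∃ T', Is12SVTable lam mu T' ∧ Benign T' ∧
      Relation.ReflTransGen (ResStep 1) (resFun 1 T u) T' ∧
      Relation.ReflTransGen (ResStep 1) (resFun 1 T v) T' := by
  have gu := res_good ok hT hB hu
  have a : ∀ r, resFun 1 T u r v = T r v := fun r => res_off (by omega) (by omega)
  have a' : ∀ r, resFun 1 T u r (v + 1) = T r (v + 1) := fun r => res_off (by omega) (by omega)
  have b : ∀ r, resFun 1 T v r u = T r u := fun r => res_off (by omega) (by omega)
  have b' : ∀ r, resFun 1 T v r (u + 1) = T r (u + 1) := fun r => res_off (by omega) (by omega)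
  have dv : Descent 1 (resFun 1 T u) v := desc_congr a a' hv
  have du : Descent 1 (resFun 1 T v) u := desc_congr b b' hu
  have g := res_good ok gu.1 gu.2 dv
  refine ⟨resFun 1 (resFun 1 T u) v, g.1, g.2, .single ⟨v, dv, rfl⟩, .single ⟨u, du, ?_⟩⟩
  funext r j
  by_cases h1 : j = v ∨ j = v + 1
  · rw [res_off (k := u) (by omega) (by omega)]
    exact res_congr a a' r j (res_off (by omega) (by omega))
  · rw [res_off (k := v) (by omega) (by omega)]
    by_cases h2 : j = u ∨ j = u + 1
    · exact (res_congr b b' r j (res_off (by omega) (by omega))).symm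
    · rw [res_off (by omega) (by omega), res_off (by omega) (by omega),
        res_off (by omega) (by omega)]

/-- Target for the overlapping case. -/
noncomputable def tgt (lam mu : ℕ → ℕ) (T : ℕ → ℕ → Finset ℕ) (u : ℕ) : ℕ → ℕ → Finset ℕ :=
  fun r j =>
    if j = u then (if InShape lam mu r j then {1} else ∅)
    else if j = u + 2 then (if InShape lam mu r j then {2} else ∅)
    else T r j

theorem near (ok : OK lam mu) (hT : Is12SVTable lam mu T) (hB : Benign T) {u : ℕ}
    (hu : Descent 1 T u) (hv : Descent 1 T (u + 1)) :
    ∃ T', Is12SVTable lam mu T' ∧ Benign T' ∧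
      Relation.ReflTransGen (ResStep 1) (resFun 1 T u) T' ∧
      Relation.ReflTransGen (ResStep 1) (resFun 1 T (u + 1)) T' := by
  have types : ColPureB 1 T u ∧ ColMixed 1 T (u + 1) ∧ ColPureA 1 T (u + 2) := by
    have c1 := cases_desc ok hT hB hu
    have c2 := cases_desc ok hT hB hv
    unfold ColMixed ColPureA ColPureB at *
    norm_num [add_assoc] at *
    tauto
  obtain ⟨p0, pm, p2⟩ := types
  obtain ⟨t, t2, t1⟩ := hu
  obtain ⟨s, s2, s1⟩ := hv
  have tu := mem_shape hT t2
  have tm := mem_shape hT t1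
  have sm := mem_shape hT s2
  have sv : InShape lam mu s (u + 2) := mem_shape hT s1
  have ts := col_mono ok hT s2 t1
  have hs := sep_mem pm.2
  have hb := bot_mem ok hT pm
  have hsu := (sq ok (col_mono ok hT hs t1) le_rfl tu (mem_shape hT hs) (by omega)).1
  have hbv : InShape lam mu (botA 1 T (u + 1)) (u + 2) :=
    (sq ok le_rfl (col_mono ok hT s2 hb) (mem_shape hT hb) sv (by omega)).2
  have suu := (sq ok ts le_rfl tu sm (by omega)).1
  have tvv : InShape lam mu t (u + 2) := (sq ok le_rfl ts tm sv (by omega)).2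
  -- left branch
  set P := op2M lam mu T u with hP
  have eP : resFun 1 T u = P := res_2M ok hT p0 pm
  have tabP : Is12SVTable lam mu P := op2M_table hT ok u
  set P2 := op21 lam mu P (u + 1) with hP2
  have P2u : ∀ r, P2 r u = if InShape lam mu r u then
      (if InShape lam mu r (u + 1) then T r (u + 1) else {2}) else ∅ := by
    intro r; simp [hP2, op21, hP, op2M, show u ≠ u + 1 + 1 by omega]
  have P2m : ∀ r, P2 r (u + 1) = if InShape lam mu r (u + 1) then {1} else ∅ := by
    intro r; simp [hP2, op21]
  have Pm : ∀ r, P r (u + 1) = if InShape lam mu r (u + 1) then {2} else ∅ := by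
    intro r; simp [hP, op2M]
  have Pv : ∀ r, P r (u + 2) = T r (u + 2) := by
    intro r; simp [hP, op2M]
  have tabP2 : Is12SVTable lam mu P2 := op21_table tabP (u + 1)
  have eP2 : resFun 1 P (u + 1) = P2 := by
    refine res_21 tabP ⟨⟨s, ?_⟩, ?_⟩ ⟨⟨s, ?_⟩, ?_⟩
    · simp [Pm, sm]
    · rintro ⟨r, hr⟩
      rw [Pm] at hr
      split_ifs at hr <;> simp at hr
    · exact (Pv s).symm ▸ s1
    · rintro ⟨r, hr⟩
      exact p2.2 ⟨r, by rw [← Pv]; exact hr⟩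
  have dP : Descent 1 P (u + 1) := ⟨s, by simp [Pm, sm], (Pv s).symm ▸ s1⟩
  have dP2 : Descent 1 P2 u := ⟨s, by simp [P2u, suu, sm, s2], by simp [P2m, sm]⟩
  have eP3 : resFun 1 P2 u = tgt lam mu T u := by
    rw [res_M1 ok tabP2]
    · funext r j
      by_cases j0 : j = u
      · simp [opM1, tgt, j0]
      by_cases j1 : j = u + 1
      · subst j1
        simp [opM1, tgt, P2u]
        by_cases a : InShape lam mu r (u + 1)
        · by_cases b : InShape lam mu r u
          · simp [a, b]
          · simp [a, b]
            refine (eq_one hT a fun h => b ?_).symm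
            exact (sq ok (col_mono ok hT h t1) le_rfl tu a (by omega)).1
        · simp [a, hT.1 r _ a]
      by_cases j2 : j = u + 2
      · subst j2
        simp [opM1, tgt, hP2, op21]
      · simp [opM1, tgt, hP2, op21, hP, op2M, j0, j1, j2]
    · exact ⟨⟨t, by simp [P2u, tu, tm, t1]⟩, ⟨s, by simp [P2u, suu, sm, s2]⟩⟩
    · refine ⟨⟨s, by simp [P2m, sm]⟩, ?_⟩
      rintro ⟨r, hr⟩
      rw [P2m] at hr
      split_ifs at hr <;> simp at hr
  -- right branch
  set Q := opM1 lam mu T (u + 1) with hQ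
  have eQ : resFun 1 T (u + 1) = Q := res_M1 ok hT pm p2
  have tabQ : Is12SVTable lam mu Q := opM1_table hT ok (u + 1)
  set Q2 := op21 lam mu Q u with hQ2
  have Q2v : ∀ r, Q2 r (u + 2) = if InShape lam mu r (u + 2) then
      (if InShape lam mu r (u + 1) then T r (u + 1) else {1}) else ∅ := by
    intro r; simp [hQ2, op21, hQ, opM1]
  have Q2m : ∀ r, Q2 r (u + 1) = if InShape lam mu r (u + 1) then {2} else ∅ := by
    intro r; simp [hQ2, op21]
  have Qm : ∀ r, Q r (u + 1) = if InShape lam mu r (u + 1) then {1} else ∅ := by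
    intro r; simp [hQ, opM1]
  have Qu : ∀ r, Q r u = T r u := by
    intro r; simp [hQ, opM1, show u ≠ u + 1 + 1 by omega]
  have tabQ2 : Is12SVTable lam mu Q2 := op21_table tabQ u
  have eQ2 : resFun 1 Q u = Q2 := by
    refine res_21 tabQ ⟨⟨t, ?_⟩, ?_⟩ ⟨⟨t, ?_⟩, ?_⟩
    · exact (Qu t).symm ▸ t2
    · rintro ⟨r, hr⟩
      exact p0.2 ⟨r, by rw [← Qu]; exact hr⟩
    · simp [Qm, tm]
    · rintro ⟨r, hr⟩
      rw [Qm] at hr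
      split_ifs at hr <;> simp at hr
  have dQ : Descent 1 Q u := ⟨t, (Qu t).symm ▸ t2, by simp [Qm, tm]⟩
  have dQ2 : Descent 1 Q2 (u + 1) :=
    ⟨t, by simp [Q2m, tm], show 1 ∈ Q2 t (u + 2) by simp [Q2v, tvv, tm, t1]⟩
  have eQ3 : resFun 1 Q2 (u + 1) = tgt lam mu T u := by
    rw [res_2M ok tabQ2]
    · funext r j
      by_cases j0 : j = u
      · subst j0
        simp [op2M, tgt, hQ2, op21, show j ≠ j + 1 + 1 by omega]
      by_cases j1 : j = u + 1
      · subst j1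
        simp [op2M, tgt, add_assoc, Q2v]
        by_cases a : InShape lam mu r (u + 1)
        · by_cases b : InShape lam mu r (u + 2)
          · simp [a, b]
          · simp [a, b]
            refine (eq_two hT a fun h => b ?_).symm
            exact (sq ok le_rfl (col_mono ok hT s2 h) a sv (by omega)).2
        · simp [a, hT.1 r _ a]
      by_cases j2 : j = u + 2
      · subst j2
        simp [op2M, tgt]
      · simp [op2M, tgt, hQ2, op21, hQ, opM1, j0, j1, j2]
    · refine ⟨⟨s, by simp [Q2m, sm]⟩, ?_⟩
      rintro ⟨r, hr⟩
      rw [Q2m] at hr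
      split_ifs at hr <;> simp at hr
    · exact ⟨⟨t, show 1 ∈ Q2 t (u + 2) by simp [Q2v, tvv, tm, t1]⟩,
        ⟨s, show 2 ∈ Q2 s (u + 2) by simp [Q2v, sv, sm, s2]⟩⟩
  have BP : Benign P := eP ▸ (res_good ok hT hB ⟨t, t2, t1⟩).2
  have BP2 : Benign P2 := eP2 ▸ (res_good ok tabP BP dP).2
  have G := res_good ok tabP2 BP2 dP2
  rw [eP3] at G
  rw [eP, eQ]
  refine ⟨tgt lam mu T u, G.1, G.2, ?_, ?_⟩
  · exact (Relation.ReflTransGen.single ⟨u + 1, dP, eP2.symm⟩).tail ⟨u, dP2, eP3.symm⟩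
  · exact (Relation.ReflTransGen.single ⟨u, dQ, eQ2.symm⟩).tail ⟨u + 1, dQ2, eQ3.symm⟩

theorem main_lt (ok : OK lam mu) (hT : Is12SVTable lam mu T) (hB : Benign T) {u v : ℕ}
    (huv : u < v) (hu : Descent 1 T u) (hv : Descent 1 T v) :
    ∃ T', Is12SVTable lam mu T' ∧ Benign T' ∧
      Relation.ReflTransGen (ResStep 1) (resFun 1 T u) T' ∧
      Relation.ReflTransGen (ResStep 1) (resFun 1 T v) T' := by
  rcases Nat.lt_or_ge v (u + 2) with h | h
  · obtain rfl : v = u + 1 := by omega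
    exact near ok hT hB hu hv
  · exact far ok hT hB h hu hv

end

end LC

/-- **local confluence.** Let `T, P, Q` be benign 12-SV tables of shape
`lam/mu` with `T → P` and `T → Q` (single descent-resolution steps). Then there is a benign
12-SV table `T'` with `P →* T'` and `Q →* T'`. -/
theorem resolution_local_confluence (lam mu : ℕ → ℕ)
    (hlam : IsPartitionFun lam) (hmu : IsPartitionFun mu) (hsub : ∀ r, mu r ≤ lam r)
    (T P Q : ℕ → ℕ → Finset ℕ)
    (hT : Is12SVTable lam mu T) (hTB : Benign T)
    (hP : Is12SVTable lam mu P) (hPB : Benign P)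
    (hQ : Is12SVTable lam mu Q) (hQB : Benign Q)
    (hTP : ResStep 1 T P) (hTQ : ResStep 1 T Q) :
    ∃ T', Is12SVTable lam mu T' ∧ Benign T' ∧
      Relation.ReflTransGen (ResStep 1) P T' ∧
      Relation.ReflTransGen (ResStep 1) Q T' := by
  obtain ⟨u, hu, rfl⟩ := hTP
  obtain ⟨v, hv, rfl⟩ := hTQ
  have ok : LC.OK lam mu := ⟨hlam, hmu⟩
  rcases Nat.lt_trichotomy u v with h | rfl | h
  · exact LC.main_lt ok hT hTB h hu hv
  · exact ⟨_, hP, hPB, .refl, .refl⟩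
  · obtain ⟨T', a, b, c, d⟩ := LC.main_lt ok hT hTB h hv hu
    exact ⟨T', a, b, d, c⟩
end

section
/- For every benign 12-SV table T of shape λ/μ, there exists a unique descent-free 12-SV table N of shape λ/μ (that is, N ∈ SVRPP^{12}(λ/μ)) such that T →* N. -/
open scoped Classical

namespace RUNF

/-- column states -/
inductive St where
  | one : St
  | two : St
  | mix : ℕ → Prop → St

def St.h1 : St → ℕ → Prop
  | .one, _ => True
  | .two, _ => False
  | .mix q f, r => r < q ∨ (r = q ∧ f)

def St.h2 : St → ℕ → Prop
  | .one, _ => False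
  | .two, _ => True
  | .mix q _, r => q ≤ r

def St.rank : St → ℕ
  | .one => 0
  | .mix _ _ => 1
  | .two => 2

noncomputable def dec (s : St) (r : ℕ) : Finset ℕ :=
  (if s.h1 r then {1} else ∅) ∪ (if s.h2 r then {2} else ∅)

lemma mem_dec (s : St) (r x : ℕ) : x ∈ dec s r ↔ (x = 1 ∧ s.h1 r) ∨ (x = 2 ∧ s.h2 r) := by
  unfold dec
  split_ifs <;> simp [*]

noncomputable def tab (lam mu : ℕ → ℕ) (c : ℕ → St) : ℕ → ℕ → Finset ℕ :=
  fun r j => if InShape lam mu r j then dec (c j) r else ∅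

lemma mem_tab (lam mu : ℕ → ℕ) (c : ℕ → St) (r j x : ℕ) :
    x ∈ tab lam mu c r j ↔
      InShape lam mu r j ∧ ((x = 1 ∧ (c j).h1 r) ∨ (x = 2 ∧ (c j).h2 r)) := by
  unfold tab
  split_ifs with h <;> simp [h, mem_dec]

def Valid (lam mu : ℕ → ℕ) (c : ℕ → St) : Prop :=
  ∀ j q f, c j = .mix q f → InShape lam mu q j ∧ (¬ f → ∃ p < q, InShape lam mu p j)

def Ben (c : ℕ → St) : Prop :=
  ∀ k k', k < k' → ∀ q f q' f', c k = .mix q f → c k' = .mix q' f' →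
    q' ≤ q ∧ (f' → q' < q)

def Desc (lam mu : ℕ → ℕ) (c : ℕ → St) (k : ℕ) : Prop :=
  ∃ r, InShape lam mu r k ∧ InShape lam mu r (k+1) ∧ (c k).h2 r ∧ (c (k+1)).h1 r

def sw (c : ℕ → St) (k : ℕ) : ℕ → St :=
  fun j => if j = k then c (k+1) else if j = k+1 then c k else c j

lemma anti {f : ℕ → ℕ} (h : IsPartitionFun f) {i j : ℕ} (hij : i ≤ j) : f j ≤ f i :=
  antitone_nat_of_succ_le h.1 hij

lemma shp {lam mu : ℕ → ℕ} (hl : IsPartitionFun lam) (hm : IsPartitionFun mu)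
    {i j k m n p : ℕ} (h1 : InShape lam mu i m) (h2 : InShape lam mu k n) (hi : i ≤ j)
    (hk : j ≤ k) (hm1 : m ≤ p) (hm2 : p ≤ n) : InShape lam mu j p := by
  have := anti hl hk
  have := anti hm hi
  unfold InShape at *
  omega

lemma tab_table (lam mu : ℕ → ℕ) (c : ℕ → St) : Is12SVTable lam mu (tab lam mu c) := by
  refine ⟨fun i j h => by simp [tab, h], fun i j h => ⟨?_, ?_⟩, fun i j h h' => ?_⟩
  · rcases hc : c j with _ | _ | ⟨q, f⟩
    · exact ⟨1, by simp [mem_tab, h, hc, St.h1]⟩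
    · exact ⟨2, by simp [mem_tab, h, hc, St.h2]⟩
    · rcases lt_or_ge i q with h3 | h3
      · exact ⟨1, by simp [mem_tab, h, hc, St.h1, h3]⟩
      · exact ⟨2, by simp [mem_tab, h, hc, St.h2, h3]⟩
  · intro x hx
    rw [mem_tab] at hx
    simp; tauto
  · intro x hx y hy
    rw [mem_tab] at hx hy
    rcases hc : c j with _ | _ | ⟨q, f⟩ <;> simp only [hc, St.h1, St.h2] at hx hy <;> grind

lemma rank_of_desc {lam mu : ℕ → ℕ} {c : ℕ → St} (hb : Ben c) {k : ℕ} (h : Desc lam mu c k) :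
    (c (k+1)).rank < (c k).rank := by
  obtain ⟨r, -, -, h2, h1⟩ := h
  have := hb k (k+1) (by omega)
  rcases hc : c k with _ | _ | ⟨q, f⟩ <;> rcases hc' : c (k+1) with _ | _ | ⟨q', f'⟩ <;>
    simp only [hc, hc', St.h1, St.h2, St.rank] at h1 h2 ⊢ <;> try omega
  have := this _ _ _ _ hc hc'
  exfalso
  rcases h1 with h1 | ⟨h1, h3⟩
  · omega
  · have := this.2 h3
    omega

lemma sw_ben {lam mu : ℕ → ℕ} {c : ℕ → St} (hb : Ben c) {k : ℕ} (h : Desc lam mu c k) :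
    Ben (sw c k) := by
  have hr := rank_of_desc hb h
  intro i j hij q f q' f' h1 h2
  unfold sw at h1 h2
  split_ifs at h1 h2 with a1 a2 a3 a4 a5 a6 a7 a8
  all_goals first
    | omega
    | exact hb _ _ (by omega) _ _ _ _ h1 h2
    | (rw [h1, h2] at hr; simp [St.rank] at hr)

lemma sw_valid {lam mu : ℕ → ℕ} (hl : IsPartitionFun lam) (hm : IsPartitionFun mu)
    {c : ℕ → St} (hv : Valid lam mu c) {k : ℕ} (hb : Ben c) (h : Desc lam mu c k) :
    Valid lam mu (sw c k) := by
  have hr := rank_of_desc hb h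
  obtain ⟨r, i1, i2, h2, h1⟩ := h
  intro j q f hj
  unfold sw at hj
  split_ifs at hj with a1 a2
  · subst a1
    obtain ⟨v1, v2⟩ := hv _ _ _ hj
    simp only [hj, St.h1] at h1
    refine ⟨shp hl hm i1 v1 (by omega) le_rfl le_rfl (by omega), fun hf => ?_⟩
    have : r < q := by tauto
    exact ⟨r, this, i1⟩
  · subst a2
    obtain ⟨v1, v2⟩ := hv _ _ _ hj
    simp only [hj, St.h2] at h2
    refine ⟨shp hl hm v1 i2 le_rfl h2 (by omega) (by omega), fun hf => ?_⟩
    obtain ⟨p, hp, hp'⟩ := v2 hf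
    exact ⟨p, hp, shp hl hm hp' i2 le_rfl (by omega) (by omega) (by omega)⟩
  · exact hv _ _ _ hj

/-- measure -/
def meas (L : ℕ) (c : ℕ → St) : ℕ := ∑ j ∈ Finset.range L, (L - j) * (c j).rank

lemma sw_meas {lam mu : ℕ → ℕ} (hl : IsPartitionFun lam)
    {c : ℕ → St} {k : ℕ} (hb : Ben c) (h : Desc lam mu c k) :
    meas (lam 0) (sw c k) < meas (lam 0) c := by
  have hr := rank_of_desc hb h
  obtain ⟨r, i1, i2, h2, h1⟩ := h
  have hk : k + 1 < lam 0 := lt_of_lt_of_le i2.2 (anti hl (Nat.zero_le r))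
  generalize lam 0 = L at *
  unfold meas
  have hd : ∀ g : ℕ → ℕ, ∑ j ∈ Finset.range L, g j =
      g k + (g (k+1) + ∑ j ∈ ((Finset.range L).erase k).erase (k+1), g j) := by
    intro g
    rw [Finset.add_sum_erase, Finset.add_sum_erase] <;> simp <;> omega
  rw [hd, hd (fun j => (L - j) * (c j).rank)]
  have he : ∑ j ∈ ((Finset.range L).erase k).erase (k+1), (L - j) * (sw c k j).rank =
     ∑ j ∈ ((Finset.range L).erase k).erase (k+1), (L - j) * (c j).rank := by
    apply Finset.sum_congr rfl
    intro j hj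
    simp at hj
    simp [sw, hj]
  rw [he]
  have e1 : sw c k k = c (k+1) := by simp [sw]
  have e2 : sw c k (k+1) = c k := by simp [sw]
  simp only [e1, e2]
  obtain ⟨m, hm⟩ : ∃ m, L = k + 1 + m := ⟨L - (k+1), by omega⟩
  have e3 : L - k = m + 1 := by omega
  have e4 : L - (k+1) = m := by omega
  rw [e3, e4]
  nlinarith

def Good (lam mu : ℕ → ℕ) (c : ℕ → St) : Prop := Valid lam mu c ∧ Ben c

def Step (lam mu : ℕ → ℕ) (c d : ℕ → St) : Prop := ∃ k, Desc lam mu c k ∧ d = sw c k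

lemma Step.good {lam mu : ℕ → ℕ} (hl : IsPartitionFun lam) (hm : IsPartitionFun mu)
    {c d : ℕ → St} (hg : Good lam mu c) (h : Step lam mu c d) : Good lam mu d := by
  obtain ⟨k, hk, rfl⟩ := h
  exact ⟨sw_valid hl hm hg.1 hg.2 hk, sw_ben hg.2 hk⟩

lemma steps_good {lam mu : ℕ → ℕ} (hl : IsPartitionFun lam) (hm : IsPartitionFun mu)
    {c d : ℕ → St} (hg : Good lam mu c) (h : Relation.ReflTransGen (Step lam mu) c d) :
    Good lam mu d := by
  induction h with
  | refl => exact hg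
  | tail _ h ih => exact h.good hl hm ih

lemma confl_near {lam mu : ℕ → ℕ} (hl : IsPartitionFun lam) (hm : IsPartitionFun mu)
    {c : ℕ → St} (hg : Good lam mu c) {k : ℕ} (hk : Desc lam mu c k)
    (hk' : Desc lam mu c (k+1)) :
    ∃ x, Relation.ReflTransGen (Step lam mu) (sw c k) x ∧
      Relation.ReflTransGen (Step lam mu) (sw c (k+1)) x := by
  have r1 := rank_of_desc hg.2 hk
  have r2 := rank_of_desc hg.2 hk'
  obtain ⟨r, i1, i2, h2, h1⟩ := hk
  obtain ⟨s, j1, j2, g2, g1⟩ := hk'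
  rcases ha : c k with _ | _ | ⟨q, f⟩ <;> rcases hb : c (k+1) with _ | _ | ⟨q, f⟩ <;>
    rcases hc : c (k+1+1) with _ | _ | ⟨q', f'⟩ <;> simp [ha, hb, hc, St.rank] at r1 r2
  obtain ⟨v1, v2⟩ := hg.1 _ _ _ hb
  simp only [hb, hc, ha, St.h1, St.h2] at h1 h2 g1 g2
  have hrq : r ≤ q := by omega
  have w1 : InShape lam mu q k := shp hl hm i1 v1 (by omega) le_rfl le_rfl (by omega)
  have w2 : InShape lam mu q (k+2) := shp hl hm v1 j2 le_rfl g2 (by omega) (by omega)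
  refine ⟨sw (sw (sw c k) (k+1)) k, ?_, ?_⟩
  · refine .tail (.single ⟨k+1, ⟨s, j1, j2, ?_, ?_⟩, rfl⟩) ⟨k, ⟨q, w1, v1, ?_, ?_⟩, rfl⟩ <;>
      simp [sw, ha, hb, hc, St.h1, St.h2, show ¬ k + 1 + 1 = k by omega, show ¬ k = k + 1 + 1 by omega]
  · have : sw (sw (sw c k) (k+1)) k = sw (sw (sw c (k+1)) k) (k+1) := by
      funext j
      simp only [sw]
      split_ifs <;> first | rfl | omega
    rw [this]
    by_cases hf : f
    · refine .tail (.single ⟨k, ⟨r, i1, i2, ?_, ?_⟩, rfl⟩)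
        ⟨k+1, ⟨q, v1, w2, ?_, ?_⟩, rfl⟩ <;>
        simp [sw, ha, hb, hc, St.h1, St.h2, show ¬ k + 1 + 1 = k by omega, show ¬ k = k + 1 + 1 by omega, hf]
    · obtain ⟨p, hp, hp'⟩ := v2 hf
      refine .tail (.single ⟨k, ⟨r, i1, i2, ?_, ?_⟩, rfl⟩)
        ⟨k+1, ⟨p, hp', shp hl hm hp' j2 le_rfl (by omega) (by omega) le_rfl, ?_, ?_⟩, rfl⟩ <;>
        simp [sw, ha, hb, hc, St.h1, St.h2, show ¬ k + 1 + 1 = k by omega, show ¬ k = k + 1 + 1 by omega, hp]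

lemma confl_far {lam mu : ℕ → ℕ} {c : ℕ → St} {k l : ℕ} (hk : Desc lam mu c k)
    (hk' : Desc lam mu c l) (hkl : k + 1 < l) :
    ∃ x, Relation.ReflTransGen (Step lam mu) (sw c k) x ∧
      Relation.ReflTransGen (Step lam mu) (sw c l) x := by
  refine ⟨sw (sw c k) l, .single ⟨l, ?_, rfl⟩, .single ⟨k, ?_, ?_⟩⟩
  · have e1 : sw c k l = c l := by simp only [sw]; split_ifs <;> first | rfl | omega
    have e2 : sw c k (l+1) = c (l+1) := by simp only [sw]; split_ifs <;> first | rfl | omega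
    unfold Desc; rw [e1, e2]; exact hk'
  · have e1 : sw c l k = c k := by simp only [sw]; split_ifs <;> first | rfl | omega
    have e2 : sw c l (k+1) = c (k+1) := by simp only [sw]; split_ifs <;> first | rfl | omega
    unfold Desc; rw [e1, e2]; exact hk
  · funext j
    simp only [sw]
    split_ifs <;> first | rfl | omega

lemma confl {lam mu : ℕ → ℕ} (hl : IsPartitionFun lam) (hm : IsPartitionFun mu)
    {c d e : ℕ → St} (hg : Good lam mu c) (h1 : Step lam mu c d) (h2 : Step lam mu c e) :
    ∃ x, Relation.ReflTransGen (Step lam mu) d x ∧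
      Relation.ReflTransGen (Step lam mu) e x := by
  obtain ⟨k, hk, rfl⟩ := h1
  obtain ⟨l, hl', rfl⟩ := h2
  rcases lt_trichotomy k l with h | rfl | h
  · rcases Nat.lt_or_ge (k+1) l with h' | h'
    · exact confl_far hk hl' h'
    · obtain rfl : l = k + 1 := by omega
      exact confl_near hl hm hg hk hl'
  · exact ⟨_, .refl, .refl⟩
  · rcases Nat.lt_or_ge (l+1) k with h' | h'
    · obtain ⟨x, a, b⟩ := confl_far hl' hk h'
      exact ⟨x, b, a⟩
    · obtain rfl : k = l + 1 := by omega
      obtain ⟨x, a, b⟩ := confl_near hl hm hg hl' hk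
      exact ⟨x, b, a⟩

def Normal (lam mu : ℕ → ℕ) (c : ℕ → St) : Prop := ∀ k, ¬ Desc lam mu c k

lemma newman {lam mu : ℕ → ℕ} (hl : IsPartitionFun lam) (hm : IsPartitionFun mu) (n : ℕ) :
    ∀ c : ℕ → St, meas (lam 0) c = n → Good lam mu c →
    ∃ d, Normal lam mu d ∧ Relation.ReflTransGen (Step lam mu) c d ∧
      ∀ m, Normal lam mu m → Relation.ReflTransGen (Step lam mu) c m → m = d := by
  have key : ∀ (n : ℕ) (c : ℕ → St), meas (lam 0) c = n → Good lam mu c →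
      ∃ d, Normal lam mu d ∧ Relation.ReflTransGen (Step lam mu) c d := by
    intro n
    induction n using Nat.strong_induction_on with
    | _ n ih =>
      intro c hc hg
      by_cases hn : Normal lam mu c
      · exact ⟨c, hn, .refl⟩
      · simp only [Normal, not_forall, not_not] at hn
        obtain ⟨k, hk⟩ := hn
        have hs : Step lam mu c (sw c k) := ⟨k, hk, rfl⟩
        obtain ⟨d, h1, h2⟩ := ih _ (hc ▸ sw_meas hl hg.2 hk) _ rfl (hs.good hl hm hg)
        exact ⟨d, h1, .head hs h2⟩
  induction n using Nat.strong_induction_on with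
  | _ n ih =>
    intro c hc hg
    obtain ⟨d, hd, hcd⟩ := key _ c rfl hg
    refine ⟨d, hd, hcd, fun m hmn hcm => ?_⟩
    rcases hcd.cases_head with rfl | ⟨d', hs, hd'⟩
    · rcases hcm.cases_head with rfl | ⟨e, ⟨k, hk, -⟩, -⟩
      · rfl
      · exact absurd hk (hd k)
    · rcases hcm.cases_head with rfl | ⟨e, hs', he⟩
      · obtain ⟨k, hk, -⟩ := hs
        exact absurd hk (hmn k)
      · have hgd := hs.good hl hm hg
        have hge := hs'.good hl hm hg
        obtain ⟨x, hx, hx'⟩ := confl hl hm hg hs hs'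
        obtain ⟨y, hy, hxy⟩ := key _ x rfl (steps_good hl hm hgd hx)
        have md : meas (lam 0) d' < n := by
          obtain ⟨k, hk, rfl⟩ := hs
          exact hc ▸ sw_meas hl hg.2 hk
        have me : meas (lam 0) e < n := by
          obtain ⟨k, hk, rfl⟩ := hs'
          exact hc ▸ sw_meas hl hg.2 hk
        obtain ⟨z, -, -, hz⟩ := ih _ md _ rfl hgd
        obtain ⟨w, -, -, hw⟩ := ih _ me _ rfl hge
        rw [hw m hmn he, hz d hd hd', ← hz y hy (hx.trans hxy), ← hw y hy (hx'.trans hxy)]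

/-! bridge -/

lemma desc_iff (lam mu : ℕ → ℕ) (c : ℕ → St) (k : ℕ) :
    Descent 1 (tab lam mu c) k ↔ Desc lam mu c k := by
  simp only [Descent, Desc, mem_tab]
  simp
  grind

lemma has1 (lam mu : ℕ → ℕ) (c : ℕ → St) (j : ℕ) :
    ColHas (tab lam mu c) j 1 ↔ ∃ r, InShape lam mu r j ∧ (c j).h1 r := by
  simp [ColHas, mem_tab]

lemma has2 (lam mu : ℕ → ℕ) (c : ℕ → St) (j : ℕ) :
    ColHas (tab lam mu c) j (1+1) ↔ ∃ r, InShape lam mu r j ∧ (c j).h2 r := by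
  simp [ColHas, mem_tab]

lemma mix_has {lam mu : ℕ → ℕ} {c : ℕ → St} (hv : Valid lam mu c) {j q : ℕ} {f : Prop}
    (h : c j = .mix q f) : ColMixed 1 (tab lam mu c) j := by
  obtain ⟨v1, v2⟩ := hv _ _ _ h
  rw [ColMixed, has1, has2]
  refine ⟨?_, q, v1, by simp [h, St.h2]⟩
  by_cases hf : f
  · exact ⟨q, v1, by simp [h, St.h1, hf]⟩
  · obtain ⟨p, hp, hp'⟩ := v2 hf
    exact ⟨p, hp', by simp [h, St.h1, hp]⟩

lemma mixed_iff {lam mu : ℕ → ℕ} {c : ℕ → St} (hv : Valid lam mu c) (j : ℕ) :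
    ColMixed 1 (tab lam mu c) j ↔ ∃ q f, c j = .mix q f := by
  refine ⟨fun h => ?_, fun ⟨q, f, h⟩ => mix_has hv h⟩
  rw [ColMixed, has1, has2] at h
  rcases hc : c j with _ | _ | ⟨q, f⟩
  · simp [hc, St.h2] at h
  · simp [hc, St.h1] at h
  · exact ⟨q, f, rfl⟩

lemma pureA_iff {lam mu : ℕ → ℕ} {c : ℕ → St} (hv : Valid lam mu c) (j : ℕ) {r : ℕ}
    (hr : InShape lam mu r j) :
    ColPureA 1 (tab lam mu c) j ↔ c j = .one := by
  rcases hc : c j with _ | _ | ⟨q, f⟩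
  · rw [ColPureA, has1, has2]; simp [hc, St.h1, St.h2]; exact ⟨r, hr⟩
  · rw [ColPureA, has1, has2]; simp [hc, St.h1, St.h2]
  · have := mix_has hv hc
    simp [ColPureA, this.2]

lemma pureB_iff {lam mu : ℕ → ℕ} {c : ℕ → St} (hv : Valid lam mu c) (j : ℕ) {r : ℕ}
    (hr : InShape lam mu r j) :
    ColPureB 1 (tab lam mu c) j ↔ c j = .two := by
  rcases hc : c j with _ | _ | ⟨q, f⟩
  · rw [ColPureB, has1, has2]; simp [hc, St.h1, St.h2]
  · rw [ColPureB, has1, has2]; simp [hc, St.h1, St.h2]; exact ⟨r, hr⟩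
  · have := mix_has hv hc
    simp [ColPureB, this.1]

lemma sep_eq {lam mu : ℕ → ℕ} {c : ℕ → St} (hv : Valid lam mu c) {j q : ℕ} {f : Prop}
    (h : c j = .mix q f) : sep 1 (tab lam mu c) j = q := by
  obtain ⟨v1, v2⟩ := hv _ _ _ h
  have : IsLeast {r : ℕ | 1 + 1 ∈ tab lam mu c r j} q := by
    constructor
    · simp [mem_tab, h, St.h2, v1]
    · intro r hr
      simp [mem_tab, h, St.h2] at hr
      exact hr.2
  exact this.csInf_eq

lemma bot_eq {lam mu : ℕ → ℕ} (hl : IsPartitionFun lam) (hm : IsPartitionFun mu)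
    {c : ℕ → St} (hv : Valid lam mu c) {j q : ℕ} {f : Prop}
    (h : c j = .mix q f) : botA 1 (tab lam mu c) j = if f then q else q - 1 := by
  obtain ⟨v1, v2⟩ := hv _ _ _ h
  have : IsGreatest {r : ℕ | 1 ∈ tab lam mu c r j} (if f then q else q - 1) := by
    split_ifs with hf
    · constructor
      · simp [mem_tab, h, St.h1, v1, hf]
      · intro r hr
        simp [mem_tab, h, St.h1] at hr
        omega
    · obtain ⟨p, hp, hp'⟩ := v2 hf
      constructor
      · simp [mem_tab, h, St.h1, hf]
        exact ⟨shp hl hm hp' v1 (by omega) (by omega) le_rfl le_rfl, by omega⟩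
      · intro r hr
        simp [mem_tab, h, St.h1, hf] at hr
        omega
  exact this.csSup_eq

lemma dec_ne (s : St) (r : ℕ) : (dec s r).Nonempty := by
  rcases s with _ | _ | ⟨q, f⟩
  · exact ⟨1, by simp [mem_dec, St.h1]⟩
  · exact ⟨2, by simp [mem_dec, St.h2]⟩
  · rcases lt_or_ge r q with h3 | h3
    · exact ⟨1, by simp [mem_dec, St.h1, h3]⟩
    · exact ⟨2, by simp [mem_dec, St.h2, h3]⟩

lemma tab_ne (lam mu : ℕ → ℕ) (c : ℕ → St) (r j : ℕ) :
    (tab lam mu c r j).Nonempty ↔ InShape lam mu r j := by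
  unfold tab
  split_ifs with h <;> simp [h, dec_ne]

lemma img (lam mu : ℕ → ℕ) (c : ℕ → St) (r j x : ℕ) :
    (tab lam mu c r j).image (fun _ => x) = if InShape lam mu r j then {x} else ∅ := by
  split_ifs with h
  · exact Finset.image_const ((tab_ne ..).2 h) x
  · simp [tab, h]

lemma res_eq {lam mu : ℕ → ℕ} (hl : IsPartitionFun lam) (hm : IsPartitionFun mu)
    {c : ℕ → St} (hg : Good lam mu c) {k : ℕ} (h : Desc lam mu c k) :
    resFun 1 (tab lam mu c) k = tab lam mu (sw c k) := by
  have hr := rank_of_desc hg.2 h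
  have hv' := sw_valid hl hm hg.1 hg.2 h
  obtain ⟨r, i1, i2, h2, h1⟩ := h
  have hv := hg.1
  funext i j
  unfold resFun
  rw [mixed_iff hv, mixed_iff hv, pureA_iff hv _ i2, pureB_iff hv _ i1]
  simp only [tab_ne, img]
  rcases ha : c k with _ | _ | ⟨q, f⟩ <;> rcases hb : c (k+1) with _ | _ | ⟨q, f⟩ <;>
    simp [ha, hb, St.rank] at hr
  · rw [if_neg (by simp), if_neg (by simp), if_pos ⟨rfl, rfl⟩]
    by_cases e1 : j = k
    · subst e1; simp [sw, tab, hb, dec, St.h1, St.h2]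
    · by_cases e2 : j = k+1
      · subst e2; simp [sw, tab, ha, dec, St.h1, St.h2]
      · simp [sw, tab, e1, e2]
  · have hq := hv' k q f (by simp [sw, hb])
    have hq2 := hv _ _ _ hb
    rw [if_neg (by simp), if_pos ⟨rfl, _, _, rfl⟩, bot_eq hl hm hv hb]
    by_cases e1 : j = k
    · subst e1
      by_cases hij : InShape lam mu i j
      · simp [sw, tab, hb, dec, St.h1, St.h2, hij]
        by_cases hf : f
        · rcases lt_trichotomy i q with h | rfl | h
          · simp [h, hf, show ¬ q ≤ i by omega]
          · simp [hf, hq2.1]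
          · simp [hf, show ¬ i < q by omega, show i ≠ q by omega, h.le]
        · obtain ⟨p, hp, hp'⟩ := hq2.2 hf
          rcases lt_trichotomy i (q-1) with h | h | h
          · simp [h, hf, show i < q by omega, show ¬ q ≤ i by omega]
          · have : InShape lam mu i (j+1) :=
              shp hl hm hp' hq2.1 (by omega) (by omega) le_rfl le_rfl
            rw [if_neg hf, if_neg (by omega), if_pos h, if_pos this]
          · simp [hf, show ¬ i < q by omega, show ¬ i < q-1 by omega, show i ≠ q - 1 by omega,
              show q ≤ i by omega]
      · simp [sw, tab, hij]
    · by_cases e2 : j = k+1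
      · subst e2; simp [sw, tab, ha, dec, St.h1, St.h2]
      · simp [sw, tab, e1, e2]
  · have hq := hv' (k+1) q f (by simp [sw, ha])
    have hq2 := hv _ _ _ ha
    rw [if_pos ⟨⟨_, _, rfl⟩, rfl⟩, sep_eq hv ha]
    by_cases e1 : j = k
    · subst e1; simp [sw, tab, hb, dec, St.h1, St.h2]
    · by_cases e2 : j = k+1
      · subst e2
        by_cases hij : InShape lam mu i (k+1)
        · simp [sw, tab, ha, dec, St.h1, St.h2, hij]
          rcases lt_trichotomy i q with h | rfl | h
          · simp [h, show ¬ q ≤ i by omega]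
          · simp [hq2.1]
          · simp [show ¬ i < q by omega, show i ≠ q by omega, h.le]
        · simp [sw, tab, hij]
      · simp [sw, tab, e1, e2]

lemma steps_lift {lam mu : ℕ → ℕ} (hl : IsPartitionFun lam) (hm : IsPartitionFun mu)
    {c : ℕ → St} (hg : Good lam mu c) {S : ℕ → ℕ → Finset ℕ}
    (h : Relation.ReflTransGen (ResStep 1) (tab lam mu c) S) :
    ∃ d, Relation.ReflTransGen (Step lam mu) c d ∧ S = tab lam mu d := by
  induction h with
  | refl => exact ⟨c, .refl, rfl⟩
  | tail _ h ih =>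
    obtain ⟨d, hd, rfl⟩ := ih
    obtain ⟨k, hk, rfl⟩ := h
    rw [desc_iff] at hk
    exact ⟨sw d k, hd.tail ⟨k, hk, rfl⟩, res_eq hl hm (steps_good hl hm hg hd) hk⟩

lemma steps_push {lam mu : ℕ → ℕ} (hl : IsPartitionFun lam) (hm : IsPartitionFun mu)
    {c d : ℕ → St} (hg : Good lam mu c) (h : Relation.ReflTransGen (Step lam mu) c d) :
    Relation.ReflTransGen (ResStep 1) (tab lam mu c) (tab lam mu d) := by
  induction h with
  | refl => exact .refl
  | tail h1 h ih =>
    obtain ⟨k, hk, rfl⟩ := h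
    exact ih.tail ⟨k, (desc_iff ..).2 hk, (res_eq hl hm (steps_good hl hm hg h1) hk).symm⟩

lemma both_iff {lam mu : ℕ → ℕ} {c : ℕ → St} (hv : Valid lam mu c) {j q : ℕ} {f : Prop}
    (h : c j = .mix q f) (hf : f) : ∃ i, tab lam mu c i j = ({1, 2} : Finset ℕ) := by
  refine ⟨q, ?_⟩
  ext x
  simp [mem_tab, h, St.h1, St.h2, hf, (hv _ _ _ h).1]

lemma ben_of {lam mu : ℕ → ℕ} {c : ℕ → St} (hv : Valid lam mu c)
    (hB : Benign (tab lam mu c)) : Ben c := by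
  have : ∀ n k k', k' - k = n → k < k' → ∀ q f q' f', c k = .mix q f → c k' = .mix q' f' →
      q' ≤ q ∧ (f' → q' < q) := by
    intro n
    induction n using Nat.strong_induction_on with
    | _ n ih =>
      intro k k' hn hkk q f q' f' h h'
      by_cases hm : ∃ m, k < m ∧ m < k' ∧ ColMixed 1 (tab lam mu c) m
      · obtain ⟨m, m1, m2, m3⟩ := hm
        obtain ⟨p, g, hp⟩ := (mixed_iff hv m).1 m3
        have a1 := ih (m - k) (by omega) k m rfl m1 _ _ _ _ h hp
        have a2 := ih (k' - m) (by omega) m k' rfl m2 _ _ _ _ hp h'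
        exact ⟨a2.1.trans a1.1, fun hf => (a2.2 hf).trans_le a1.1⟩
      · have := hB k k' hkk (mix_has hv h) (mix_has hv h')
          (fun m m1 m2 m3 => hm ⟨m, m1, m2, m3⟩)
        rw [sep_eq hv h, sep_eq hv h'] at this
        exact ⟨this.1, fun hf => this.2 (both_iff hv h' hf)⟩
  exact fun k k' h => this _ k k' rfl h

lemma encode {lam mu : ℕ → ℕ} (hl : IsPartitionFun lam) (hm : IsPartitionFun mu)
    {T : ℕ → ℕ → Finset ℕ} (hT : Is12SVTable lam mu T) :
    ∃ c, Valid lam mu c ∧ T = tab lam mu c := by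
  obtain ⟨t0, t1, t2⟩ := hT
  have hin : ∀ i j x, x ∈ T i j → InShape lam mu i j ∧ (x = 1 ∨ x = 2) := by
    intro i j x hx
    have : InShape lam mu i j := by
      by_contra h
      simp [t0 i j h] at hx
    exact ⟨this, by simpa using (t1 i j this).2 hx⟩
  have hor : ∀ i j, InShape lam mu i j → 1 ∈ T i j ∨ 2 ∈ T i j := by
    intro i j h
    obtain ⟨x, hx⟩ := (t1 i j h).1
    rcases (hin _ _ _ hx).2 with rfl | rfl <;> simp [hx]
  have hmon : ∀ j i d, 2 ∈ T i j → InShape lam mu (i + d + 1) j →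
      2 ∈ T (i+d+1) j ∧ 1 ∉ T (i+d+1) j := by
    intro j i d h
    induction d with
    | zero =>
      intro h'
      have := t2 i j (hin _ _ _ h).1 h' 2 h
      have h1 : 1 ∉ T (i+0+1) j := fun hh => by have := this 1 hh; omega
      exact ⟨(hor _ _ h').resolve_left h1, h1⟩
    | succ d ih =>
      intro h'
      have hi : InShape lam mu (i+d+1) j :=
        shp hl hm (hin _ _ _ h).1 h' (by omega) (by omega) le_rfl le_rfl
      have := t2 _ j hi h' 2 (ih hi).1
      have h1 : 1 ∉ T (i+(d+1)+1) j := fun hh => by have := this 1 hh; omega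
      exact ⟨(hor _ _ h').resolve_left h1, h1⟩
  have hmon' : ∀ j i k, i < k → 2 ∈ T i j → InShape lam mu k j → 2 ∈ T k j ∧ 1 ∉ T k j := by
    intro j i k hik h hk
    obtain ⟨d, rfl⟩ : ∃ d, k = i + d + 1 := ⟨k - i - 1, by omega⟩
    exact hmon j i d h hk
  have hcol : ∀ j, ∃ s : St, (∀ q f, s = .mix q f → InShape lam mu q j ∧
      (¬ f → ∃ p < q, InShape lam mu p j)) ∧
      ∀ r, InShape lam mu r j → ((1 ∈ T r j ↔ s.h1 r) ∧ (2 ∈ T r j ↔ s.h2 r)) := by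
    intro j
    by_cases a2 : ∃ r, 2 ∈ T r j
    · by_cases a1 : ∃ r, 1 ∈ T r j
      · set q := Nat.find a2 with hq
        have q2 : 2 ∈ T q j := Nat.find_spec a2
        have qm : ∀ r, r < q → 2 ∉ T r j := fun r hr => Nat.find_min a2 hr
        refine ⟨.mix q (1 ∈ T q j), ?_, ?_⟩
        · intro q' f he
          injection he with he1 he2
          subst he1; subst he2
          refine ⟨(hin _ _ _ q2).1, fun hf => ?_⟩
          obtain ⟨p, hp⟩ := a1
          rcases lt_trichotomy p q with h | h | h
          · exact ⟨p, h, (hin _ _ _ hp).1⟩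
          · exact absurd (h ▸ hp) hf
          · exact absurd hp (hmon' _ _ _ h q2 (hin _ _ _ hp).1).2
        · intro r hr
          simp only [St.h1, St.h2]
          rcases lt_trichotomy r q with h | h | h
          · have := qm r h
            have := hor r j hr
            simp [h, show ¬ q ≤ r by omega]; tauto
          · rw [h]; simp [q2]
          · have := hmon' _ _ _ h q2 hr
            simp [this, h.le, show ¬ r < q by omega, show r ≠ q by omega]
      · refine ⟨.two, by simp, fun r hr => ?_⟩
        have := hor r j hr
        simp only [St.h1, St.h2]
        push Not at a1
        have := a1 r
        tauto
    · refine ⟨.one, by simp, fun r hr => ?_⟩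
      have := hor r j hr
      simp only [St.h1, St.h2]
      push Not at a2
      have := a2 r
      tauto
  choose c hc1 hc2 using hcol
  refine ⟨c, fun j q f h => hc1 j q f h, ?_⟩
  funext i j
  ext x
  rw [mem_tab]
  constructor
  · intro hx
    obtain ⟨h1, h2⟩ := hin _ _ _ hx
    refine ⟨h1, ?_⟩
    have := hc2 j i h1
    rcases h2 with rfl | rfl
    · exact .inl ⟨rfl, this.1.1 hx⟩
    · exact .inr ⟨rfl, this.2.1 hx⟩
  · rintro ⟨h1, ⟨rfl, h⟩ | ⟨rfl, h⟩⟩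
    · exact (hc2 j i h1).1.2 h
    · exact (hc2 j i h1).2.2 h

end RUNF

/-- For every benign 12-SV table `T` of shape `lam/mu` there is a unique
descent-free 12-SV table `N` of shape `lam/mu` (i.e. `N ∈ SVRPP^{12}(lam/mu)`) with
`T →* N` under descent resolution. -/
theorem resolution_unique_normal_form (lam mu : ℕ → ℕ)
    (hlam : IsPartitionFun lam) (hmu : IsPartitionFun mu) (hsub : ∀ r, mu r ≤ lam r)
    (T : ℕ → ℕ → Finset ℕ) (hT : Is12SVTable lam mu T) (hB : Benign T) :
    ∃! N : ℕ → ℕ → Finset ℕ,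
      Is12SVTable lam mu N ∧ (∀ k, ¬ Descent 1 N k) ∧
      Relation.ReflTransGen (ResStep 1) T N := by

  obtain ⟨c, hv, rfl⟩ := RUNF.encode hlam hmu hT
  have hg : RUNF.Good lam mu c := ⟨hv, RUNF.ben_of hv hB⟩
  obtain ⟨d, hd, hcd, hu⟩ := RUNF.newman hlam hmu _ c rfl hg
  refine ⟨RUNF.tab lam mu d, ⟨RUNF.tab_table lam mu d, fun k hk => ?_,
    RUNF.steps_push hlam hmu hg hcd⟩, ?_⟩
  · exact hd k ((RUNF.desc_iff ..).1 hk)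
  · rintro N ⟨-, hN, hTN⟩
    obtain ⟨e, he, rfl⟩ := RUNF.steps_lift hlam hmu hg hTN
    rw [hu e (fun k hk => hN k ((RUNF.desc_iff ..).2 hk)) he]
end

section
/- Let T ∈ SVRPP^n(λ/μ) and 1 ≤ i < n, and let T^{(i)} be the subtableau of T occupied by the letters i and i+1. Then the subsequence of the reading word read(T) formed by the letters i and i+1 is equal to read(T^{(i)}). -/
open scoped Classical

/-! ### Crystal operators on set-valued reverse plane partitions -/

/-- The restriction `T^{(i)}` of a filling to the letters `i` and `i+1`: each box keeps
its intersection with `{i, i+1}`. -/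
def restrictTwo (i : ℕ) (T : ℕ → ℕ → Finset ℕ) : ℕ → ℕ → Finset ℕ :=
  fun r j => (T r j).filter (fun x => x = i ∨ x = i + 1)

/-- The complement of `T^{(i)}` inside `T`: each box keeps its letters other than
`i` and `i+1`. -/
def eraseTwo (i : ℕ) (T : ℕ → ℕ → Finset ℕ) : ℕ → ℕ → Finset ℕ :=
  fun r j => (T r j).filter (fun x => ¬ (x = i ∨ x = i + 1))

/-- Recombine a filling `T` with a new `{i, i+1}`-part `S`. -/
def mergeTwo (i : ℕ) (T S : ℕ → ℕ → Finset ℕ) : ℕ → ℕ → Finset ℕ :=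
  fun r j => eraseTwo i T r j ∪ S r j

/-- In column `A`, replace every letter `i+1` by `i`. -/
def raiseCol (i A : ℕ) (S : ℕ → ℕ → Finset ℕ) : ℕ → ℕ → Finset ℕ :=
  fun r j => if j = A then (S r j).image (fun x => if x = i + 1 then i else x) else S r j

/-- In column `A`, replace every letter `i` by `i+1`. -/
def lowerCol (i A : ℕ) (S : ℕ → ℕ → Finset ℕ) : ℕ → ℕ → Finset ℕ :=
  fun r j => if j = A then (S r j).image (fun x => if x = i then i + 1 else x) else S r j

/-- Suffix statistic of the `i`-signature: the number of `(i+1)`-pure columns `≥ p` minus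
the number of `i`-pure columns `≥ p` (of `T^{(i)}`). -/
noncomputable def fsuffix (i : ℕ) (T : ℕ → ℕ → Finset ℕ) (p : ℕ) : ℤ :=
  (Set.ncard {j : ℕ | p ≤ j ∧ ColPureB i (restrictTwo i T) j} : ℤ) -
  (Set.ncard {j : ℕ | p ≤ j ∧ ColPureA i (restrictTwo i T) j} : ℤ)

/-- Prefix statistic of the `i`-signature: the number of `i`-pure columns `≤ p` minus the
number of `(i+1)`-pure columns `≤ p` (of `T^{(i)}`). -/
noncomputable def gprefix (i : ℕ) (T : ℕ → ℕ → Finset ℕ) (p : ℕ) : ℤ :=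
  (Set.ncard {j : ℕ | j ≤ p ∧ ColPureA i (restrictTwo i T) j} : ℤ) -
  (Set.ncard {j : ℕ | j ≤ p ∧ ColPureB i (restrictTwo i T) j} : ℤ)

/-- Column `A` carries the leftmost uncancelled `−` of the reduced `i`-signature of `T`:
it is `(i+1)`-pure and is the largest maximizer of the suffix statistic. -/
def LeftmostUnpairedMinus (i : ℕ) (T : ℕ → ℕ → Finset ℕ) (A : ℕ) : Prop :=
  ColPureB i (restrictTwo i T) A ∧
  (∀ p, fsuffix i T p ≤ fsuffix i T A) ∧
  (∀ p, A < p → fsuffix i T p < fsuffix i T A)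

/-- Column `A` carries the rightmost uncancelled `+` of the reduced `i`-signature of `T`:
it is `i`-pure and is the smallest maximizer of the prefix statistic. -/
def RightmostUnpairedPlus (i : ℕ) (T : ℕ → ℕ → Finset ℕ) (A : ℕ) : Prop :=
  ColPureA i (restrictTwo i T) A ∧
  (∀ p, gprefix i T p ≤ gprefix i T A) ∧
  (∀ p, p < A → gprefix i T p < gprefix i T A)

/-- `ERel i T T'` : `T'` is obtained from `T` by the raising operator `e_i`: change all
`(i+1)`'s to `i`'s in the column of the leftmost uncancelled `−`, run the
descent-resolution algorithm on the `{i, i+1}`-part until no descent remains, and merge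
the result back into `T`. -/
def ERel (i : ℕ) (T T' : ℕ → ℕ → Finset ℕ) : Prop :=
  ∃ A S', LeftmostUnpairedMinus i T A ∧
    Relation.ReflTransGen (ResStep i) (raiseCol i A (restrictTwo i T)) S' ∧
    (∀ k, ¬ Descent i S' k) ∧
    T' = mergeTwo i T S'

/-- `FRel i T T'` : `T'` is obtained from `T` by the lowering operator `f_i`. -/
def FRel (i : ℕ) (T T' : ℕ → ℕ → Finset ℕ) : Prop :=
  ∃ A S', RightmostUnpairedPlus i T A ∧
    Relation.ReflTransGen (ResStep i) (lowerCol i A (restrictTwo i T)) S' ∧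
    (∀ k, ¬ Descent i S' k) ∧
    T' = mergeTwo i T S'

/-- The raising crystal operator `e_i` (with value `none` playing the role of `0`). -/
noncomputable def eOp (i : ℕ) (T : ℕ → ℕ → Finset ℕ) : Option (ℕ → ℕ → Finset ℕ) :=
  if h : ∃ T', ERel i T T' then some h.choose else none

/-- The lowering crystal operator `f_i` (with value `none` playing the role of `0`). -/
noncomputable def fOp (i : ℕ) (T : ℕ → ℕ → Finset ℕ) : Option (ℕ → ℕ → Finset ℕ) :=
  if h : ∃ T', FRel i T T' then some h.choose else none

/-! ### Reading words -/

/-- The contribution of row `r` to the reading word of `T` (columns bounded by `C`; empty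
boxes are skipped). First the non-pivot entries are read from right to left, within each
box from largest to smallest; then the pivots (minima of boxes) are read from left to
right, omitting every pivot equal to the maximum entry of the (nonempty) box directly
above it. -/
noncomputable def rowRead (C : ℕ) (T : ℕ → ℕ → Finset ℕ) (r : ℕ) : List ℕ :=
  (((List.range C).reverse).flatMap
      (fun j => ((T r j).sort (· ≤ ·)).tail.reverse)) ++
  ((List.range C).filterMap
      (fun j =>
        if h : (T r j).Nonempty then
          (if r ≠ 0 ∧ (T r j).min' h ∈ T (r - 1) j ∧
              (∀ x ∈ T (r - 1) j, x ≤ (T r j).min' h)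
           then none else some ((T r j).min' h))
        else none))

/-- The reading word of `T`: rows are read from bottom (row `R - 1`) to top (row `0`). -/
noncomputable def readWord (R C : ℕ) (T : ℕ → ℕ → Finset ℕ) : List ℕ :=
  ((List.range R).reverse).flatMap (fun r => rowRead C T r)

/-- The height vector of `T`: the sequence of (0-indexed) row indices of the letters of
the reading word. -/
noncomputable def heightWord (R C : ℕ) (T : ℕ → ℕ → Finset ℕ) : List ℕ :=
  ((List.range R).reverse).flatMap (fun r => (rowRead C T r).map (fun _ => r))

/-- A word is a reverse lattice (Yamanouchi) word if every suffix contains at least as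
many `a`'s as `b`'s whenever `a < b` (for positive letters). -/
def IsReverseLatticeWord (w : List ℕ) : Prop :=
  ∀ k a b, 1 ≤ a → a < b → (w.drop k).count b ≤ (w.drop k).count a

theorem aux_sort_filter (S : Finset ℕ) (p : ℕ → Prop) [DecidablePred p] :
    (S.filter p).sort (· ≤ ·) = (S.sort (· ≤ ·)).filter (fun x => decide (p x)) := by
  apply List.Perm.eq_of_pairwise' (r := (· ≤ ·))
  · exact Finset.pairwise_sort _ _
  · exact (Finset.pairwise_sort _ _).filter _
  · rw [List.perm_ext_iff_of_nodup (Finset.sort_nodup _ _) ((Finset.sort_nodup _ _).filter _)]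
    intro a
    simp

theorem aux_sort_min (S : Finset ℕ) (h : S.Nonempty) :
    S.sort (· ≤ ·) = S.min' h :: (S.sort (· ≤ ·)).tail := by
  have hne : S.sort (· ≤ ·) ≠ [] := by
    intro hs
    obtain ⟨x, hx⟩ := h
    have := (Finset.mem_sort (· ≤ ·)).2 hx
    rw [hs] at this
    simp at this
  have h0 : S.min' h = (S.sort (· ≤ ·)).head hne := by
    rw [Finset.min'_eq_sorted_zero, List.head_eq_getElem]
  rw [h0, List.cons_head_tail]

/-- non-special box -/
def NonSpec (i : ℕ) (S : Finset ℕ) : Prop :=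
  ∀ y ∈ S, y < i → ∀ x ∈ S, ¬ (x = i ∨ x = i + 1)

theorem aux_np (i : ℕ) (S : Finset ℕ) (h : NonSpec i S) :
    ((S.filter (fun x => x = i ∨ x = i + 1)).sort (· ≤ ·)).tail.reverse =
    ((S.sort (· ≤ ·)).tail.reverse).filter (fun x => decide (x = i ∨ x = i + 1)) := by
  rw [aux_sort_filter, List.filter_reverse]
  congr 1
  have hp := Finset.pairwise_sort S (· ≤ ·)
  have hm : ∀ x, x ∈ S.sort (· ≤ ·) ↔ x ∈ S := fun x => Finset.mem_sort _
  generalize S.sort (· ≤ ·) = l at hp hm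
  cases l with
  | nil => simp
  | cons a l =>
    rw [List.pairwise_cons] at hp
    by_cases ha : a = i ∨ a = i + 1
    · simp [ha]
    · have hl : ∀ x ∈ l, ¬ (x = i ∨ x = i + 1) := by
        intro x hx
        have h1 := hp.1 x hx
        by_cases hai : a < i
        · exact h a ((hm a).1 (by simp)) hai x ((hm x).1 (by simp [hx]))
        · omega
      have hnil : l.filter (fun x => decide (x = i ∨ x = i + 1)) = [] := by
        rw [List.filter_eq_nil_iff]
        intro x hx
        simpa using hl x hx
      rw [List.filter_cons_of_neg (by simpa using ha)]
      rw [List.tail_cons, hnil, List.tail_nil]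

/-- pivot -/
noncomputable def pv (T : ℕ → ℕ → Finset ℕ) (r j : ℕ) : Option ℕ :=
  if h : (T r j).Nonempty then
          (if r ≠ 0 ∧ (T r j).min' h ∈ T (r - 1) j ∧
              (∀ x ∈ T (r - 1) j, x ≤ (T r j).min' h)
           then none else some ((T r j).min' h))
        else none

theorem aux_pv (i : ℕ) (T : ℕ → ℕ → Finset ℕ) (r j : ℕ)
    (hcol : r ≠ 0 → FinsetLE (T (r - 1) j) (T r j)) (h : NonSpec i (T r j)) :
    pv (restrictTwo i T) r j = (pv T r j).filter (fun x => decide (x = i ∨ x = i + 1)) := by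
  by_cases hF : (restrictTwo i T r j).Nonempty
  · obtain ⟨x, hx⟩ := id hF
    have hx' := Finset.mem_filter.1 hx
    have hne : (T r j).Nonempty := ⟨x, hx'.1⟩
    have hmem := Finset.min'_mem _ hne
    have hle := Finset.min'_le _ x hx'.1
    have hge : ¬ (T r j).min' hne < i := fun hlt => h _ hmem hlt x hx'.1 hx'.2
    have hgood : (T r j).min' hne = i ∨ (T r j).min' hne = i + 1 := by omega
    have heq : (restrictTwo i T r j).min' hF = (T r j).min' hne := by
      apply le_antisymm
      · exact Finset.min'_le _ _ (Finset.mem_filter.2 ⟨hmem, hgood⟩)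
      · exact Finset.min'_le _ _ (Finset.mem_filter.1 (Finset.min'_mem _ hF)).1
    unfold pv
    rw [dif_pos hF, dif_pos hne, heq]
    generalize (T r j).min' hne = m at *
    have hiff : (r ≠ 0 ∧ m ∈ restrictTwo i T (r - 1) j ∧
              (∀ x ∈ restrictTwo i T (r - 1) j, x ≤ m)) ↔ (r ≠ 0 ∧ m ∈ T (r - 1) j ∧
              (∀ x ∈ T (r - 1) j, x ≤ m)) := by
      constructor
      · rintro ⟨h0, h1, h2⟩
        exact ⟨h0, (Finset.mem_filter.1 h1).1, fun y hy => hcol h0 y hy m hmem⟩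
      · rintro ⟨h0, h1, h2⟩
        exact ⟨h0, Finset.mem_filter.2 ⟨h1, hgood⟩, fun y hy => h2 y (Finset.mem_filter.1 hy).1⟩
    by_cases hc : (r ≠ 0 ∧ m ∈ T (r - 1) j ∧ (∀ x ∈ T (r - 1) j, x ≤ m))
    · rw [if_pos hc, if_pos (hiff.2 hc)]; rfl
    · rw [if_neg hc, if_neg (fun h => hc (hiff.1 h))]
      simp [Option.filter, hgood]
  · have h1 : pv (restrictTwo i T) r j = none := by unfold pv; rw [dif_neg hF]
    rw [h1]
    symm
    unfold pv
    split_ifs with hne hc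
    · rfl
    · have : ¬ ((T r j).min' hne = i ∨ (T r j).min' hne = i + 1) := fun hg =>
        hF ⟨_, Finset.mem_filter.2 ⟨Finset.min'_mem _ hne, hg⟩⟩
      simp only [Option.filter, this, decide_false]
      rfl
    · rfl

theorem aux_pv_spec (i : ℕ) (T : ℕ → ℕ → Finset ℕ) (r j y x : ℕ)
    (hcol : r ≠ 0 → FinsetLE (T (r - 1) j) (T r j))
    (hy : y ∈ T r j) (hyi : y < i) (hx : x ∈ T r j) (hxg : x = i ∨ x = i + 1) :
    (pv T r j).filter (fun x => decide (x = i ∨ x = i + 1)) = none ∧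
    ∃ m, pv (restrictTwo i T) r j = some m ∧
      (((T r j).sort (· ≤ ·)).tail.reverse).filter (fun x => decide (x = i ∨ x = i + 1)) =
      ((restrictTwo i T r j).sort (· ≤ ·)).tail.reverse ++ [m] := by
  have hne : (T r j).Nonempty := ⟨x, hx⟩
  have hF : (restrictTwo i T r j).Nonempty := ⟨x, Finset.mem_filter.2 ⟨hx, hxg⟩⟩
  have hle := Finset.min'_le _ y hy
  have hng : ¬ ((T r j).min' hne = i ∨ (T r j).min' hne = i + 1) := by omega
  constructor
  · unfold pv
    rw [dif_pos hne]
    split_ifs with hc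
    · rfl
    · simp only [Option.filter, hng, decide_false]
      rfl
  · refine ⟨(restrictTwo i T r j).min' hF, ?_, ?_⟩
    · unfold pv
      rw [dif_pos hF, if_neg]
      rintro ⟨h0, h1, h2⟩
      have h3 := Finset.mem_filter.1 h1
      have := hcol h0 _ h3.1 y hy
      omega
    · rw [List.filter_reverse]
      have e1 : (restrictTwo i T r j).sort (· ≤ ·) = ((T r j).sort (· ≤ ·)).filter
          (fun x => decide (x = i ∨ x = i + 1)) := aux_sort_filter _ _
      have e2 : ((T r j).sort (· ≤ ·)).tail.filter (fun x => decide (x = i ∨ x = i + 1)) =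
          (restrictTwo i T r j).sort (· ≤ ·) := by
        rw [e1]
        conv_rhs => rw [aux_sort_min _ hne]
        rw [List.filter_cons_of_neg (by simpa using hng)]
      rw [e2]
      conv_lhs => rw [aux_sort_min _ hF]
      rw [List.reverse_cons]

theorem aux_row_le (lam mu : ℕ → ℕ) (T : ℕ → ℕ → Finset ℕ) (hT : IsSVRPP lam mu T)
    (r j d : ℕ) : FinsetLE (T r j) (T r (j + d + 1)) := by
  obtain ⟨h1, h2, -, h4, -⟩ := hT
  have hin : ∀ j x, x ∈ T r j → InShape lam mu r j := by
    intro j x hx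
    by_contra hc
    rw [h1 r j hc] at hx
    simp at hx
  induction d with
  | zero =>
    intro a ha b hb
    exact h4 r j (hin _ _ ha) (hin _ _ hb) a ha b hb
  | succ d ih =>
    intro a ha b hb
    have i1 := hin _ _ ha
    have i2 := hin _ _ hb
    have i3 : InShape lam mu r (j + d + 1) := by
      unfold InShape at *
      omega
    obtain ⟨c, hc⟩ := h2 _ _ i3
    exact (ih a ha c hc).trans (h4 r (j + d + 1) i3 i2 c hc b hb)

theorem aux_col_le (lam mu : ℕ → ℕ) (T : ℕ → ℕ → Finset ℕ) (hT : IsSVRPP lam mu T)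
    (r j : ℕ) (hr : r ≠ 0) : FinsetLE (T (r - 1) j) (T r j) := by
  obtain ⟨h1, h2, -, -, h5⟩ := hT
  have hin : ∀ r j x, x ∈ T r j → InShape lam mu r j := by
    intro r j x hx
    by_contra hc
    rw [h1 r j hc] at hx
    simp at hx
  obtain ⟨r, rfl⟩ := Nat.exists_eq_succ_of_ne_zero hr
  intro a ha b hb
  exact h5 r j (hin _ _ _ ha) (hin _ _ _ hb) a ha b hb

theorem aux_flatMap_congr {α β : Type*} {f g : α → List β} : ∀ {l : List α},
    (∀ a ∈ l, f a = g a) → l.flatMap f = l.flatMap g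
  | [], _ => rfl
  | a :: l, h => by
    rw [List.flatMap_cons, List.flatMap_cons, h a (by simp),
      aux_flatMap_congr (fun b hb => h b (by simp [hb]))]

theorem aux_filterMap_congr {α β : Type*} {f g : α → Option β} : ∀ {l : List α},
    (∀ a ∈ l, f a = g a) → l.filterMap f = l.filterMap g
  | [], _ => rfl
  | a :: l, h => by
    rw [List.filterMap_cons, List.filterMap_cons, h a (by simp),
      aux_filterMap_congr (fun b hb => h b (by simp [hb]))]

theorem aux_rowRead (C : ℕ) (T : ℕ → ℕ → Finset ℕ) (r : ℕ) :
    rowRead C T r = (((List.range C).reverse).flatMap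
      (fun j => ((T r j).sort (· ≤ ·)).tail.reverse)) ++ (List.range C).filterMap (pv T r) := rfl

theorem aux_row (lam mu : ℕ → ℕ) (T : ℕ → ℕ → Finset ℕ) (hT : IsSVRPP lam mu T)
    (C i r : ℕ) : rowRead C (restrictTwo i T) r =
      (rowRead C T r).filter (fun x => decide (x = i ∨ x = i + 1)) := by
  have hcol := fun j => aux_col_le lam mu T hT r j
  rw [aux_rowRead, aux_rowRead, List.filter_append, List.filter_flatMap, List.filter_filterMap]
  by_cases hall : ∀ j < C, NonSpec i (T r j)
  · congr 1
    · apply aux_flatMap_congr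
      intro j hj
      exact aux_np i _ (hall j (by simpa using hj))
    · apply aux_filterMap_congr
      intro j hj
      exact aux_pv i T r j (hcol j) (hall j (by simpa using hj))
  · unfold NonSpec at hall
    push Not at hall
    obtain ⟨k, hk, y, hy, hyi, x, hx, hxg⟩ := hall
    have hlt : ∀ j < k, ∀ z ∈ T r j, z < i := by
      intro j hj z hz
      obtain ⟨d, rfl⟩ : ∃ d, k = j + d + 1 := ⟨k - j - 1, by omega⟩
      have := aux_row_le lam mu T hT r j d z hz y hy
      omega
    have hgt : ∀ j, k < j → NonSpec i (T r j) := by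
      intro j hj z hz hzi
      obtain ⟨d, rfl⟩ : ∃ d, j = k + d + 1 := ⟨j - k - 1, by omega⟩
      have := aux_row_le lam mu T hT r k d x hx z hz
      omega
    have hltS : ∀ j < k, NonSpec i (T r j) := by
      intro j hj z hz hzi w hw
      have := hlt j hj w hw
      omega
    have hltE : ∀ j < k, restrictTwo i T r j = ∅ := by
      intro j hj
      rw [Finset.eq_empty_iff_forall_notMem]
      intro z hz
      have hz := Finset.mem_filter.1 hz
      have := hlt j hj z hz.1
      omega
    obtain ⟨l2, hl2, hl2m⟩ : ∃ l2, List.range C = List.range k ++ k :: l2 ∧ ∀ j ∈ l2, k < j := by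
      obtain ⟨e, rfl⟩ : ∃ e, C = k + (e + 1) := ⟨C - k - 1, by omega⟩
      refine ⟨(List.range e).map (fun x => k + (x + 1)), ?_, ?_⟩
      · rw [List.range_add, List.range_succ_eq_map]
        simp
      · intro j hj
        simp at hj
        omega
    obtain ⟨hn, m, hm, hs⟩ := aux_pv_spec i T r k y x (hcol k) hy hyi hx hxg
    have a1 : (List.range k).reverse.flatMap
        (fun j => ((restrictTwo i T r j).sort (· ≤ ·)).tail.reverse) = [] := by
      rw [List.flatMap_eq_nil_iff]
      intro j hj
      rw [hltE j (by simpa using hj)]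
      simp
    have a2 : (List.range k).reverse.flatMap
        (fun j => (((T r j).sort (· ≤ ·)).tail.reverse).filter
          (fun x => decide (x = i ∨ x = i + 1))) = [] := by
      rw [← a1]
      apply aux_flatMap_congr
      intro j hj
      exact (aux_np i _ (hltS j (by simpa using hj))).symm
    have a3 : (List.range k).filterMap (pv (restrictTwo i T) r) = [] := by
      rw [List.filterMap_eq_nil_iff]
      intro j hj
      unfold pv
      rw [dif_neg]
      rw [hltE j (by simpa using hj)]
      simp
    have a4 : (List.range k).filterMap
        (fun j => (pv T r j).filter (fun x => decide (x = i ∨ x = i + 1))) = [] := by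
      rw [← a3]
      apply aux_filterMap_congr
      intro j hj
      exact (aux_pv i T r j (hcol j) (hltS j (by simpa using hj))).symm
    have b1 : l2.reverse.flatMap
        (fun j => ((restrictTwo i T r j).sort (· ≤ ·)).tail.reverse) = l2.reverse.flatMap
        (fun j => (((T r j).sort (· ≤ ·)).tail.reverse).filter
          (fun x => decide (x = i ∨ x = i + 1))) := by
      apply aux_flatMap_congr
      intro j hj
      exact aux_np i _ (hgt j (hl2m j (by simpa using hj)))
    have b2 : l2.filterMap (pv (restrictTwo i T) r) = l2.filterMap
        (fun j => (pv T r j).filter (fun x => decide (x = i ∨ x = i + 1))) := by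
      apply aux_filterMap_congr
      intro j hj
      exact aux_pv i T r j (hcol j) (hgt j (hl2m j hj))
    rw [hl2, List.reverse_append, List.reverse_cons, List.filterMap_append, List.filterMap_append,
      List.filterMap_cons_some hm, List.filterMap_cons_none
        (f := fun j => (pv T r j).filter (fun x => decide (x = i ∨ x = i + 1))) hn]
    simp only [List.flatMap_append, List.flatMap_cons, List.flatMap_nil]
    rw [a1, a2, a3, a4, b1, b2, hs]
    simp

/-- For `T ∈ SVRPP^n(lam/mu)` and `1 ≤ i < n`, the subsequence of
`read(T)` formed by the letters `i` and `i+1` equals `read(T^{(i)})`, where `T^{(i)}` is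
the restriction of `T` to the letters `i, i+1`. (`R` bounds the rows and `C` the columns
of the shape.) -/
theorem readWord_restrict (lam mu : ℕ → ℕ)
    (hlam : IsPartitionFun lam) (hmu : IsPartitionFun mu) (hsub : ∀ r, mu r ≤ lam r)
    (R C : ℕ) (hR : ∀ r, R ≤ r → lam r = 0) (hC : ∀ r, lam r ≤ C)
    (n : ℕ) (hn : 1 ≤ n) (i : ℕ) (hi1 : 1 ≤ i) (hi2 : i < n)
    (T : ℕ → ℕ → Finset ℕ) (hT : IsSVRPPn lam mu n T) :
    readWord R C (restrictTwo i T) =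
      (readWord R C T).filter (fun x => decide (x = i ∨ x = i + 1)) := by
  unfold readWord
  rw [List.filter_flatMap]
  apply aux_flatMap_congr
  intro r _
  exact aux_row lam mu T hT.1 C i r
end
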